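/- Every infinite zero-dimensional σ-Polish metrizable topological space X is weakly homeomorphic to one of the following nine spaces: the countably infinite discrete space ω, the Cantor space 2^ω, the Baire space ℕ^ω, the rationals ℚ (with the topology inherited from ℝ), ℚ ⊕ 2^ω, ℚ × 2^ω, ℚ ⊕ ℕ^ω, (ℚ × 2^ω) ⊕ ℕ^ω, or ℚ × ℕ^ω. -/

import Mathlib

/-!
Call `X` a *summand* of `Y`, written `X ≼ Y`, if `X ⊕ R` is weakly homeomorphic to `Y` for some `R`.
Closed subspaces are summands, since every set has a nonempty relatively open part inside or outside
a given closed set. The reference spaces `T` other than `ℕ` are absorbing, `ℕ × T ≼ T`. Pełczyński's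
decomposition trick then shows that `X ≼ T ≼ X` implies that `X` and `T` are weakly homeomorphic
(`Summand.antisymm`), and that a space with summands `T`, `T'` has `T ⊕ T'` as a summand
(`Summand.sum_of_absorbing`). Everything reduces to comparing `X` with the reference spaces by `≼`.

A dichotomy in the manner of Cantor and Bendixson (`exists_scattered_or_kernel`) is applied to
several closed-hereditary classes of subsets of `X`, such as the Polish ones or those that are
Polish or countable. Either `X` is, up to weak homeomorphism, a countable topological sum of members
of the class, which bounds `X` from above, or `X` contains a nonempty closed set `K` no nonempty
relatively open subset of which is in the class. In the latter case `K` is not locally Polish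
anywhere, so the closed Polish sets covering `X` are nowhere dense in `K`, and `K` contains a closed
copy of `ℚ`, `ℚ × 2^ω` or `ℚ × ℕ^ω`, according to whether all its clopen parts contain a point, a
copy of `2^ω` or a copy of `ℕ^ω`. The last two come from the perfect set theorem and from the
Hurewicz theorem that a Polish space which is not σ-compact contains a closed copy of `ℕ^ω`.

The upper bounds `D ≼ ℚ`, `D ≼ ℚ × 2^ω`, `D ≼ ℚ × ℕ^ω` and the closed copies inside `K` are obtained
from one construction, `CantorEmbeddable.exists_isClosedEmbedding`: a space `D` covered by closed
Polish sets `F n` embeds as a closed subspace into any zero-dimensional separable metrizable `E`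
covered by closed nowhere dense sets `G n`, as soon as every `F n` has closed embeddings into all
nonempty clopen subsets of `E`. At level `n`, one embeds `F n` and cuts the remainder into clopen
sets that shrink towards it, matched with clopen subsets of `E` shrinking in the same way towards
the image and avoiding `G n`; then one proceeds inside each matched pair. Every point of `D` is
eventually embedded because of the sets `F n`, and the image is closed because of the sets `G n`.
A σ-compact Polish space need not be a closed subspace of `2^ω`, but it is a summand of it because
its image under any embedding is still resolvable.
-/

open Set Function Topology

/-- A map `f : X → Y` is weakly discontinuous if every nonempty subset `A ⊆ X`
contains a nonempty subset `U`, open in the subspace topology of `A`, on which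
`f` restricts to a continuous map. -/
def WeaklyDiscontinuous {X Y : Type*} [TopologicalSpace X] [TopologicalSpace Y]
    (f : X → Y) : Prop :=
  ∀ A : Set X, A.Nonempty → ∃ U : Set X, U ⊆ A ∧ U.Nonempty ∧
    (∃ V : Set X, IsOpen V ∧ U = A ∩ V) ∧ ContinuousOn f U

/-- Topological spaces `X` and `Y` are weakly homeomorphic if there is a bijection
`f : X → Y` such that both `f` and its inverse are weakly discontinuous. -/
def WeaklyHomeomorphic (X : Type*) (Y : Type*) [TopologicalSpace X] [TopologicalSpace Y] :
    Prop :=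
  ∃ (f : X → Y) (g : Y → X), Function.LeftInverse g f ∧ Function.RightInverse g f ∧
    WeaklyDiscontinuous f ∧ WeaklyDiscontinuous g

/-- A space is σ-Polish if it is a countable union of closed subsets each of which
is Polish in the subspace topology. -/
def IsSigmaPolish (X : Type*) [TopologicalSpace X] : Prop :=
  ∃ C : ℕ → Set X, (∀ n, IsClosed (C n)) ∧ (⋃ n, C n) = Set.univ ∧
    ∀ n, PolishSpace ↥(C n)

/-! ### Weakly discontinuous maps -/

theorem weaklyDiscontinuous_iff {X Y : Type*} [TopologicalSpace X] [TopologicalSpace Y]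
    {f : X → Y} : WeaklyDiscontinuous f ↔ ∀ A : Set X, A.Nonempty →
      ∃ V : Set X, IsOpen V ∧ (A ∩ V).Nonempty ∧ ContinuousOn f (A ∩ V) := by
  constructor
  · intro h A hA
    obtain ⟨U, -, hne, ⟨V, hV, rfl⟩, hc⟩ := h A hA
    exact ⟨V, hV, hne, hc⟩
  · intro h A hA
    obtain ⟨V, hV, hne, hc⟩ := h A hA
    exact ⟨A ∩ V, inter_subset_left, hne, ⟨V, hV, rfl⟩, hc⟩

theorem Continuous.weaklyDiscontinuous {X Y : Type*} [TopologicalSpace X] [TopologicalSpace Y]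
    {f : X → Y} (hf : Continuous f) : WeaklyDiscontinuous f :=
  weaklyDiscontinuous_iff.2 fun A hA => ⟨univ, isOpen_univ, by simpa using hA, hf.continuousOn⟩

theorem WeaklyDiscontinuous.comp {X Y Z : Type*} [TopologicalSpace X] [TopologicalSpace Y]
    [TopologicalSpace Z] {g : Y → Z} {f : X → Y} (hg : WeaklyDiscontinuous g)
    (hf : WeaklyDiscontinuous f) : WeaklyDiscontinuous (g ∘ f) := by
  rw [weaklyDiscontinuous_iff] at *
  intro A hA
  obtain ⟨V, hV, hne, hc⟩ := hf A hA
  obtain ⟨W, hW, hne', hc'⟩ := hg (f '' (A ∩ V)) (hne.image f)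
  obtain ⟨O, hO, hOe⟩ := (continuousOn_iff'.1 hc) W hW
  obtain ⟨_, ⟨x, hx, rfl⟩, hxW⟩ := hne'
  have hxO : x ∈ O := (hOe.subset ⟨hxW, hx⟩).1
  refine ⟨V ∩ O, hV.inter hO, ⟨x, hx.1, hx.2, hxO⟩, ?_⟩
  refine hc'.comp (hc.mono fun y hy => ⟨hy.1, hy.2.1⟩) ?_
  intro y hy
  exact ⟨⟨y, ⟨hy.1, hy.2.1⟩, rfl⟩, (hOe.symm.subset ⟨hy.2.2, hy.1, hy.2.1⟩).1⟩

theorem WeaklyDiscontinuous.of_sum {X Y Z : Type*} [TopologicalSpace X] [TopologicalSpace Y]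
    [TopologicalSpace Z] {f : X ⊕ Y → Z} (h₁ : WeaklyDiscontinuous (f ∘ Sum.inl))
    (h₂ : WeaklyDiscontinuous (f ∘ Sum.inr)) : WeaklyDiscontinuous f := by
  rw [weaklyDiscontinuous_iff] at *
  rintro A ⟨x | y, hx⟩
  · obtain ⟨V, hV, ⟨z, hz⟩, hc⟩ := h₁ (Sum.inl ⁻¹' A) ⟨x, hx⟩
    refine ⟨Sum.inl '' V, isOpenMap_inl V hV, ⟨Sum.inl z, hz.1, z, hz.2, rfl⟩, ?_⟩
    rintro _ ⟨hA, w, hw, rfl⟩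
    have := hc w ⟨hA, hw⟩
    rw [inter_comm, ← image_inter_preimage, inter_comm]
    rw [ContinuousWithinAt, ← IsOpenEmbedding.inl.isEmbedding.map_nhdsWithin_eq,
      Filter.tendsto_map'_iff]
    exact this
  · obtain ⟨V, hV, ⟨z, hz⟩, hc⟩ := h₂ (Sum.inr ⁻¹' A) ⟨y, hx⟩
    refine ⟨Sum.inr '' V, isOpenMap_inr V hV, ⟨Sum.inr z, hz.1, z, hz.2, rfl⟩, ?_⟩
    rintro _ ⟨hA, w, hw, rfl⟩
    have := hc w ⟨hA, hw⟩
    rw [inter_comm, ← image_inter_preimage, inter_comm]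
    rw [ContinuousWithinAt, ← IsOpenEmbedding.inr.isEmbedding.map_nhdsWithin_eq,
      Filter.tendsto_map'_iff]
    exact this

theorem WeaklyDiscontinuous.of_sigma {ι : Type*} {X : ι → Type*} {Z : Type*}
    [∀ i, TopologicalSpace (X i)] [TopologicalSpace Z] {f : (Σ i, X i) → Z}
    (h : ∀ i, WeaklyDiscontinuous fun x : X i => f ⟨i, x⟩) : WeaklyDiscontinuous f := by
  rw [weaklyDiscontinuous_iff]
  rintro A ⟨⟨i, x⟩, hx⟩
  obtain ⟨V, hV, ⟨z, hz⟩, hc⟩ := weaklyDiscontinuous_iff.1 (h i) (Sigma.mk i ⁻¹' A) ⟨x, hx⟩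
  refine ⟨Sigma.mk i '' V, isOpenMap_sigmaMk V hV, ⟨⟨i, z⟩, hz.1, z, hz.2, rfl⟩, ?_⟩
  rintro _ ⟨hA, w, hw, rfl⟩
  have := hc w ⟨hA, hw⟩
  rw [inter_comm, ← image_inter_preimage, inter_comm]
  rw [ContinuousWithinAt, ← IsOpenEmbedding.sigmaMk.isEmbedding.map_nhdsWithin_eq,
    Filter.tendsto_map'_iff]
  exact this

/-! ### Weak homeomorphisms and topological sums -/

theorem Homeomorph.weaklyHomeomorphic {X Y : Type*} [TopologicalSpace X] [TopologicalSpace Y]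
    (e : X ≃ₜ Y) : WeaklyHomeomorphic X Y :=
  ⟨e, e.symm, e.left_inv, e.right_inv, e.continuous.weaklyDiscontinuous,
    e.symm.continuous.weaklyDiscontinuous⟩

theorem WeaklyHomeomorphic.refl (X : Type*) [TopologicalSpace X] : WeaklyHomeomorphic X X :=
  (Homeomorph.refl X).weaklyHomeomorphic

theorem WeaklyHomeomorphic.symm {X Y : Type*} [TopologicalSpace X] [TopologicalSpace Y]
    (h : WeaklyHomeomorphic X Y) : WeaklyHomeomorphic Y X := by
  obtain ⟨f, g, h₁, h₂, h₃, h₄⟩ := h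
  exact ⟨g, f, h₂, h₁, h₄, h₃⟩

theorem WeaklyHomeomorphic.trans {X Y Z : Type*} [TopologicalSpace X] [TopologicalSpace Y]
    [TopologicalSpace Z] (h : WeaklyHomeomorphic X Y) (h' : WeaklyHomeomorphic Y Z) :
    WeaklyHomeomorphic X Z := by
  obtain ⟨f, g, h₁, h₂, h₃, h₄⟩ := h
  obtain ⟨f', g', h₁', h₂', h₃', h₄'⟩ := h'
  exact ⟨f' ∘ f, g ∘ g', h₁'.comp h₁, h₂'.comp h₂, h₃'.comp h₃, h₄.comp h₄'⟩

theorem WeaklyHomeomorphic.sum {X Y X' Y' : Type*} [TopologicalSpace X] [TopologicalSpace Y]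
    [TopologicalSpace X'] [TopologicalSpace Y'] (h : WeaklyHomeomorphic X X')
    (h' : WeaklyHomeomorphic Y Y') : WeaklyHomeomorphic (X ⊕ Y) (X' ⊕ Y') := by
  obtain ⟨f, g, h₁, h₂, h₃, h₄⟩ := h
  obtain ⟨f', g', h₁', h₂', h₃', h₄'⟩ := h'
  refine ⟨Sum.map f f', Sum.map g g', ?_, ?_, .of_sum ?_ ?_, .of_sum ?_ ?_⟩
  · rintro (x | x) <;> simp [h₁ _, h₁' _]
  · rintro (x | x) <;> simp [h₂ _, h₂' _]
  · exact continuous_inl.weaklyDiscontinuous.comp h₃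
  · exact continuous_inr.weaklyDiscontinuous.comp h₃'
  · exact continuous_inl.weaklyDiscontinuous.comp h₄
  · exact continuous_inr.weaklyDiscontinuous.comp h₄'

theorem WeaklyHomeomorphic.sigma {ι : Type*} {X Y : ι → Type*} [∀ i, TopologicalSpace (X i)]
    [∀ i, TopologicalSpace (Y i)] (h : ∀ i, WeaklyHomeomorphic (X i) (Y i)) :
    WeaklyHomeomorphic (Σ i, X i) (Σ i, Y i) := by
  choose f g h₁ h₂ h₃ h₄ using h
  refine ⟨Sigma.map id f, Sigma.map id g, ?_, ?_, .of_sigma fun i => ?_, .of_sigma fun i => ?_⟩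
  · rintro ⟨i, x⟩
    simp [Sigma.map, h₁ i x]
  · rintro ⟨i, x⟩
    simp [Sigma.map, h₂ i x]
  · exact continuous_sigmaMk.weaklyDiscontinuous.comp (h₃ i)
  · exact continuous_sigmaMk.weaklyDiscontinuous.comp (h₄ i)

theorem sigma_const_homeomorph (T : Type*) [TopologicalSpace T] :
    Nonempty ((Σ _ : ℕ, T) ≃ₜ ℕ × T) := by
  refine ⟨{ toEquiv := Equiv.sigmaEquivProd ℕ T, continuous_toFun := ?_, continuous_invFun := ?_ }⟩
  · refine continuous_sigma fun i => ?_
    exact Continuous.prodMk continuous_const continuous_id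
  · show Continuous fun p : ℕ × T => (⟨p.1, p.2⟩ : Σ _ : ℕ, T)
    rw [continuous_iff_continuousAt]
    rintro ⟨n, t⟩
    have h : Continuous fun p : ℕ × T => (⟨n, p.2⟩ : Σ _ : ℕ, T) :=
      continuous_sigmaMk.comp continuous_snd
    refine h.continuousAt.congr ?_
    have : {p : ℕ × T | p.1 = n} ∈ 𝓝 (n, t) :=
      ((isOpen_discrete ({n} : Set ℕ)).preimage continuous_fst).mem_nhds rfl
    filter_upwards [this] with p hp
    obtain ⟨m, s⟩ := p
    have hp' : m = n := hp
    subst hp'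
    rfl

/-- A partition of `X` indexed by a map `k`, such that every nonempty set has a nonempty relatively
open subset inside a single piece, exhibits `X` as the sum of the pieces up to weak
homeomorphism. -/
theorem weaklyHomeomorphic_sigma_fiber {X ι : Type*} [TopologicalSpace X] (k : X → ι)
    (hk : ∀ A : Set X, A.Nonempty → ∃ V : Set X, IsOpen V ∧ (A ∩ V).Nonempty ∧
      ∃ i, ∀ x ∈ A ∩ V, k x = i) :
    WeaklyHomeomorphic X (Σ i, ↥(k ⁻¹' {i})) := by
  refine ⟨fun x => ⟨k x, x, rfl⟩, fun p => p.2.1, fun x => rfl, ?_, ?_, ?_⟩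
  · rintro ⟨i, x, hx⟩
    have : k x = i := hx
    subst this
    rfl
  · rw [weaklyDiscontinuous_iff]
    intro A hA
    obtain ⟨V, hV, hne, i, hi⟩ := hk A hA
    refine ⟨V, hV, hne, ?_⟩
    rw [continuousOn_iff_continuous_domRestrict]
    have h : Continuous fun x : ↥(A ∩ V) => (⟨i, x.1, hi x.1 x.2⟩ : Σ i, ↥(k ⁻¹' {i})) :=
      continuous_sigmaMk.comp (Continuous.subtype_mk continuous_subtype_val _)
    convert h using 1
    funext x
    have : k x.1 = i := hi x.1 x.2
    subst this
    rfl
  · exact (continuous_sigma fun i => continuous_subtype_val).weaklyDiscontinuous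

/-- A set is resolvable if every nonempty set has a nonempty relatively open subset that lies
inside the set or inside its complement. -/
def Resolvable {X : Type*} [TopologicalSpace X] (S : Set X) : Prop :=
  ∀ A : Set X, A.Nonempty → ∃ V : Set X, IsOpen V ∧ (A ∩ V).Nonempty ∧
    (A ∩ V ⊆ S ∨ A ∩ V ⊆ Sᶜ)

theorem IsClosed.resolvable {X : Type*} [TopologicalSpace X] {S : Set X} (hS : IsClosed S) :
    Resolvable S := by
  intro A hA
  by_cases h : A ⊆ S
  · exact ⟨univ, isOpen_univ, by simpa using hA, Or.inl (by simpa using h)⟩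
  · obtain ⟨x, hx, hxS⟩ := not_subset.1 h
    exact ⟨Sᶜ, hS.isOpen_compl, ⟨x, hx, hxS⟩, Or.inr inter_subset_right⟩

theorem Resolvable.weaklyHomeomorphic {X : Type*} [TopologicalSpace X] {S : Set X}
    (hS : Resolvable S) : WeaklyHomeomorphic (↥S ⊕ ↥Sᶜ) X := by
  classical
  refine ⟨Sum.elim Subtype.val Subtype.val,
    fun x => if h : x ∈ S then Sum.inl ⟨x, h⟩ else Sum.inr ⟨x, h⟩, ?_, ?_,
    (Continuous.sumElim continuous_subtype_val continuous_subtype_val).weaklyDiscontinuous, ?_⟩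
  · rintro (⟨x, hx⟩ | ⟨x, hx⟩)
    · simp [hx]
    · have : x ∉ S := hx
      simp [this]
  · intro x
    by_cases hx : x ∈ S <;> simp [hx]
  · rw [weaklyDiscontinuous_iff]
    intro A hA
    obtain ⟨V, hV, hne, h | h⟩ := hS A hA
    · refine ⟨V, hV, hne, ?_⟩
      rw [continuousOn_iff_continuous_domRestrict]
      have hc : Continuous fun x : ↥(A ∩ V) => (Sum.inl ⟨x.1, h x.2⟩ : ↥S ⊕ ↥Sᶜ) :=
        continuous_inl.comp (Continuous.subtype_mk continuous_subtype_val _)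
      convert hc using 1
      funext x
      have : x.1 ∈ S := h x.2
      simp [this]
    · refine ⟨V, hV, hne, ?_⟩
      rw [continuousOn_iff_continuous_domRestrict]
      have hc : Continuous fun x : ↥(A ∩ V) => (Sum.inr ⟨x.1, h x.2⟩ : ↥S ⊕ ↥Sᶜ) :=
        continuous_inr.comp (Continuous.subtype_mk continuous_subtype_val _)
      convert hc using 1
      funext x
      have : x.1 ∉ S := h x.2
      simp [this]

/-! ### Being a summand up to weak homeomorphism -/

/-- `X` is a summand of `Y`: for some space `R`, the sum `X ⊕ R` is weakly homeomorphic to `Y`. -/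
def Summand (X Y : Type) [TopologicalSpace X] [TopologicalSpace Y] : Prop :=
  ∃ (R : Type) (_ : TopologicalSpace R), WeaklyHomeomorphic (X ⊕ R) Y

section Summand

variable {X Y Z X' Y' T T' : Type} [TopologicalSpace X] [TopologicalSpace Y] [TopologicalSpace Z]
  [TopologicalSpace X'] [TopologicalSpace Y'] [TopologicalSpace T] [TopologicalSpace T']

theorem Summand.trans (h : Summand X Y) (h' : Summand Y Z) : Summand X Z := by
  obtain ⟨R, _, h⟩ := h
  obtain ⟨R', _, h'⟩ := h'
  exact ⟨R ⊕ R', inferInstance,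
    ((Homeomorph.sumAssoc X R R').symm.weaklyHomeomorphic.trans (h.sum (.refl R'))).trans h'⟩

theorem WeaklyHomeomorphic.summand (h : WeaklyHomeomorphic X Y) : Summand X Y :=
  ⟨Empty, inferInstance, (Homeomorph.sumEmpty X Empty).weaklyHomeomorphic.trans h⟩

theorem Topology.IsEmbedding.summand {f : X → Y} (hf : IsEmbedding f)
    (hr : Resolvable (range f)) : Summand X Y :=
  ⟨↥(range f)ᶜ, inferInstance,
    (hf.toHomeomorph.weaklyHomeomorphic.sum (.refl _)).trans hr.weaklyHomeomorphic⟩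

theorem Topology.IsClosedEmbedding.summand {f : X → Y} (hf : IsClosedEmbedding f) :
    Summand X Y :=
  hf.isEmbedding.summand hf.isClosed_range.resolvable

theorem weaklyHomeomorphic_sum_sum_sum_comm (A B C D : Type) [TopologicalSpace A]
    [TopologicalSpace B] [TopologicalSpace C] [TopologicalSpace D] :
    WeaklyHomeomorphic ((A ⊕ B) ⊕ (C ⊕ D)) ((A ⊕ C) ⊕ (B ⊕ D)) := by
  refine Homeomorph.weaklyHomeomorphic ?_
  refine (Homeomorph.sumAssoc A B (C ⊕ D)).trans ?_
  refine Homeomorph.trans ?_ (Homeomorph.sumAssoc A C (B ⊕ D)).symm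
  refine (Homeomorph.refl A).sumCongr ?_
  refine (Homeomorph.sumAssoc B C D).symm.trans ?_
  exact ((Homeomorph.sumComm B C).sumCongr (Homeomorph.refl D)).trans (Homeomorph.sumAssoc C B D)

theorem Summand.sum (h : Summand X X') (h' : Summand Y Y') : Summand (X ⊕ Y) (X' ⊕ Y') := by
  obtain ⟨R, _, h⟩ := h
  obtain ⟨R', _, h'⟩ := h'
  exact ⟨R ⊕ R', inferInstance, (weaklyHomeomorphic_sum_sum_sum_comm X Y R R').trans (h.sum h')⟩

theorem summand_sum_left (X Y : Type) [TopologicalSpace X] [TopologicalSpace Y] :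
    Summand X (X ⊕ Y) :=
  ⟨Y, inferInstance, .refl _⟩

theorem summand_sum_right (X Y : Type) [TopologicalSpace X] [TopologicalSpace Y] :
    Summand Y (X ⊕ Y) :=
  (summand_sum_left Y X).trans (Homeomorph.sumComm Y X).weaklyHomeomorphic.summand

theorem Summand.sigma {V W : ℕ → Type} [∀ i, TopologicalSpace (V i)] [∀ i, TopologicalSpace (W i)]
    (h : ∀ i, Summand (V i) (W i)) : Summand (Σ i, V i) (Σ i, W i) := by
  choose R tR h using h
  refine ⟨Σ i, R i, inferInstance, WeaklyHomeomorphic.trans ?_ (.sigma h)⟩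
  refine WeaklyHomeomorphic.symm (Homeomorph.weaklyHomeomorphic ?_)
  refine { toEquiv := Equiv.sigmaSumDistrib V R, continuous_toFun := ?_, continuous_invFun := ?_ }
  · refine continuous_sigma fun i => ?_
    refine continuous_sum_dom.2 ⟨?_, ?_⟩
    · exact continuous_inl.comp continuous_sigmaMk
    · exact continuous_inr.comp continuous_sigmaMk
  · refine continuous_sum_dom.2 ⟨continuous_sigma fun i => ?_, continuous_sigma fun i => ?_⟩
    · have : Continuous fun v : V i => (⟨i, Sum.inl v⟩ : Σ i, V i ⊕ R i) :=
        continuous_sigmaMk.comp continuous_inl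
      exact this
    · have : Continuous fun v : R i => (⟨i, Sum.inr v⟩ : Σ i, V i ⊕ R i) :=
        continuous_sigmaMk.comp continuous_inr
      exact this

theorem Summand.sigma_of_absorbing {V : ℕ → Type} [∀ i, TopologicalSpace (V i)]
    (h : ∀ i, Summand (V i) T) (hT : Summand (ℕ × T) T) : Summand (Σ i, V i) T := by
  obtain ⟨e⟩ := sigma_const_homeomorph T
  exact ((Summand.sigma h).trans e.weaklyHomeomorphic.summand).trans hT

theorem weaklyHomeomorphic_sum_nat_prod (T : Type) [TopologicalSpace T] :
    WeaklyHomeomorphic (T ⊕ ℕ × T) (ℕ × T) := by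
  have e : Unit ⊕ ℕ ≃ₜ ℕ :=
    { toEquiv := (Equiv.sumComm _ _).trans Equiv.natSumPUnitEquivNat
      continuous_toFun := continuous_of_discreteTopology
      continuous_invFun := continuous_of_discreteTopology }
  exact (((Homeomorph.punitProd T).symm.sumCongr (Homeomorph.refl _)).trans
    ((Homeomorph.sumProdDistrib (X := Unit) (Y := ℕ) (Z := T)).symm.trans
      (e.prodCongr (Homeomorph.refl T)))).weaklyHomeomorphic

/-- Pełczyński decomposition: `ℕ × Y` absorbs every summand of `Y`, since
`ℕ × Y ≈ ℕ × X ⊕ ℕ × R ≈ X ⊕ ℕ × X ⊕ ℕ × R ≈ X ⊕ ℕ × Y`. -/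
theorem Summand.absorb (h : Summand X Y) : WeaklyHomeomorphic (X ⊕ ℕ × Y) (ℕ × Y) := by
  obtain ⟨R, _, h⟩ := h
  obtain ⟨e₁⟩ := sigma_const_homeomorph (X ⊕ R)
  obtain ⟨e₂⟩ := sigma_const_homeomorph Y
  have key : WeaklyHomeomorphic (ℕ × Y) (ℕ × X ⊕ ℕ × R) :=
    (e₂.symm.weaklyHomeomorphic.trans (.sigma fun _ => h.symm)).trans
      (e₁.trans (Homeomorph.prodSumDistrib (X := ℕ) (Y := X) (Z := R))).weaklyHomeomorphic
  refine ((WeaklyHomeomorphic.refl X).sum key).trans ?_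
  refine (Homeomorph.sumAssoc X (ℕ × X) (ℕ × R)).symm.weaklyHomeomorphic.trans ?_
  exact ((weaklyHomeomorphic_sum_nat_prod X).sum (.refl _)).trans key.symm

/-- If `ℕ × Y` is a summand of `Z`, then `Z` absorbs every summand of `Y`. -/
theorem Summand.absorb_of_nat_prod (h : Summand X Y) (h' : Summand (ℕ × Y) Z) :
    WeaklyHomeomorphic (X ⊕ Z) Z := by
  obtain ⟨R, _, hR⟩ := h'
  refine ((WeaklyHomeomorphic.refl X).sum hR.symm).trans ?_
  refine (Homeomorph.sumAssoc X (ℕ × Y) R).symm.weaklyHomeomorphic.trans ?_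
  exact (h.absorb.sum (.refl R)).trans hR

/-- A Cantor–Bernstein theorem: if `T` absorbs countably many copies of itself, then a space which
is a summand of `T` and has `T` as a summand is weakly homeomorphic to `T`, both being weakly
homeomorphic to `X ⊕ T`. -/
theorem Summand.antisymm (h : Summand X T) (h' : Summand T X) (hT : Summand (ℕ × T) T) :
    WeaklyHomeomorphic X T := by
  have h₁ : WeaklyHomeomorphic (X ⊕ T) T := h.absorb_of_nat_prod hT
  have h₂ : WeaklyHomeomorphic (T ⊕ X) X :=
    (WeaklyHomeomorphic.refl T).summand.absorb_of_nat_prod (hT.trans h')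
  exact (h₂.symm.trans (Homeomorph.sumComm T X).weaklyHomeomorphic).trans h₁

theorem Summand.sum_of_absorbing (h : Summand T X) (h' : Summand T' X) (hT : Summand (ℕ × T) T) :
    Summand (T ⊕ T') X := by
  have h₁ : WeaklyHomeomorphic (T ⊕ X) X :=
    (WeaklyHomeomorphic.refl T).summand.absorb_of_nat_prod (hT.trans h)
  exact ((WeaklyHomeomorphic.refl T).summand.sum h').trans h₁.summand

theorem Summand.nat_prod_sum (hT : Summand (ℕ × T) T) (hT' : Summand (ℕ × T') T') :
    Summand (ℕ × (T ⊕ T')) (T ⊕ T') :=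
  (Homeomorph.prodSumDistrib (X := ℕ) (Y := T) (Z := T')).weaklyHomeomorphic.summand.trans
    (hT.sum hT')

end Summand

/-! ### Zero-dimensional separable metrizable spaces -/

/-- A space homeomorphic to a subspace of the Cantor space.  Among metrizable spaces these are
exactly the separable ones having a base of clopen sets; this formulation is obviously
hereditary and provides metrizability and second countability at once. -/
def CantorEmbeddable (X : Type*) [TopologicalSpace X] : Prop :=
  ∃ c : X → (ℕ → Bool), IsEmbedding c

section CantorEmbeddable

variable {X Y : Type*} [TopologicalSpace X] [TopologicalSpace Y]

theorem CantorEmbeddable.of_isEmbedding {f : X → Y} (hf : IsEmbedding f)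
    (hY : CantorEmbeddable Y) : CantorEmbeddable X := by
  obtain ⟨c, hc⟩ := hY
  exact ⟨c ∘ f, hc.comp hf⟩

theorem CantorEmbeddable.subtype (hX : CantorEmbeddable X) (S : Set X) : CantorEmbeddable ↥S :=
  hX.of_isEmbedding .subtypeVal

theorem CantorEmbeddable.secondCountableTopology (hX : CantorEmbeddable X) :
    SecondCountableTopology X := by
  obtain ⟨c, hc⟩ := hX
  exact hc.secondCountableTopology

theorem CantorEmbeddable.metrizableSpace (hX : CantorEmbeddable X) :
    TopologicalSpace.MetrizableSpace X := by
  obtain ⟨c, hc⟩ := hX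
  exact hc.metrizableSpace

theorem CantorEmbeddable.exists_isClopen (hX : CantorEmbeddable X) {x : X} {U : Set X}
    (hU : U ∈ 𝓝 x) : ∃ V, IsClopen V ∧ x ∈ V ∧ V ⊆ U := by
  obtain ⟨c, hc⟩ := hX
  rw [hc.isInducing.nhds_eq_comap, Filter.mem_comap] at hU
  obtain ⟨W, hW, hWU⟩ := hU
  obtain ⟨V, hV, hxV, hVW⟩ :=
    (isTopologicalBasis_isClopen (X := ℕ → Bool)).mem_nhds_iff.1 hW
  exact ⟨c ⁻¹' V, IsClopen.preimage hV hc.continuous, hxV, (preimage_mono hVW).trans hWU⟩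

/-- The characteristic functions of a countable base of clopen sets embed the space into the
Cantor space. -/
theorem CantorEmbeddable.of_isTopologicalBasis [SecondCountableTopology X] [T0Space X]
    (h : TopologicalSpace.IsTopologicalBasis {s : Set X | IsClopen s}) : CantorEmbeddable X := by
  classical
  obtain ⟨b, hbs, hbc, hb⟩ := h.exists_countable
  obtain ⟨u, hu⟩ : ∃ u : ℕ → Set X, insert ∅ b = range u :=
    (hbc.insert ∅).exists_eq_range ⟨∅, mem_insert _ _⟩
  have huc : ∀ n, IsClopen (u n) := by
    intro n
    have : u n ∈ insert ∅ b := hu ▸ mem_range_self n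
    rcases this with h | h
    · rw [h]; exact isClopen_empty
    · exact hbs h
  let c : X → (ℕ → Bool) := fun x n => (u n).boolIndicator x
  have hc : Continuous c :=
    continuous_pi fun n => (continuous_boolIndicator_iff_isClopen (u n)).2 (huc n)
  have hind : IsInducing c := by
    rw [isInducing_iff_nhds]
    intro x
    refine le_antisymm hc.continuousAt.le_comap ?_
    intro U hU
    obtain ⟨V, hV, hxV, hVU⟩ := hb.mem_nhds_iff.1 hU
    obtain ⟨n, rfl⟩ : V ∈ range u := hu ▸ mem_insert_of_mem _ hV
    refine ⟨{f | f n = true}, ?_, ?_⟩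
    · have hn : Continuous fun f : ℕ → Bool => f n := continuous_apply n
      have : IsOpen {f : ℕ → Bool | f n = true} := (isOpen_discrete {true}).preimage hn
      exact this.mem_nhds ((mem_iff_boolIndicator _ _).1 hxV)
    · intro y hy
      exact hVU ((mem_iff_boolIndicator _ _).2 hy)
  exact ⟨c, hind.isEmbedding⟩

theorem CantorEmbeddable.of_compactSpace [CompactSpace X] [T2Space X] [TotallyDisconnectedSpace X]
    [SecondCountableTopology X] : CantorEmbeddable X :=
  .of_isTopologicalBasis isTopologicalBasis_isClopen

theorem CantorEmbeddable.prod (hX : CantorEmbeddable X) (hY : CantorEmbeddable Y) :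
    CantorEmbeddable (X × Y) := by
  obtain ⟨c, hc⟩ := hX
  obtain ⟨d, hd⟩ := hY
  exact .of_isEmbedding (hc.prodMap hd) .of_compactSpace

theorem CantorEmbeddable.nat_arrow (hX : CantorEmbeddable X) : CantorEmbeddable (ℕ → X) := by
  obtain ⟨c, hc⟩ := hX
  exact .of_isEmbedding (IsEmbedding.piMap fun _ : ℕ => hc) .of_compactSpace

theorem cantorEmbeddable_nat : CantorEmbeddable ℕ := by
  refine .of_isTopologicalBasis ?_
  refine TopologicalSpace.isTopologicalBasis_of_isOpen_of_nhds (fun u hu => hu.isOpen) ?_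
  intro a u ha hu
  exact ⟨u, isClopen_discrete u, ha, subset_rfl⟩

/-- In a countable metric space all but countably many balls around a point are clopen. -/
theorem CantorEmbeddable.of_countable [TopologicalSpace.MetrizableSpace X] [Countable X] :
    CantorEmbeddable X := by
  let := TopologicalSpace.metrizableSpaceMetric X
  have : SecondCountableTopology X :=
    UniformSpace.secondCountable_of_separable X
  refine .of_isTopologicalBasis ?_
  refine TopologicalSpace.isTopologicalBasis_of_isOpen_of_nhds (fun u hu => hu.isOpen) ?_
  intro a u ha hu
  obtain ⟨ε, hε, hεu⟩ := Metric.isOpen_iff.1 hu a ha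
  have hcount : (range fun x => dist x a).Countable := countable_range _
  obtain ⟨r, hr, hr'⟩ : ∃ r ∈ Ioo 0 ε, r ∉ range fun x => dist x a := by
    by_contra! hcon
    have : (Ioo 0 ε).Countable := hcount.mono hcon
    rw [← Cardinal.le_aleph0_iff_set_countable, Cardinal.mk_Ioo_real hε] at this
    exact absurd this (not_le.2 Cardinal.aleph0_lt_continuum)
  refine ⟨Metric.ball a r, ⟨?_, Metric.isOpen_ball⟩, Metric.mem_ball_self hr.1,
    (Metric.ball_subset_ball hr.2.le).trans hεu⟩
  have : Metric.ball a r = Metric.closedBall a r := by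
    ext x
    simp only [Metric.mem_ball, Metric.mem_closedBall]
    exact ⟨le_of_lt, fun h => lt_of_le_of_ne h fun h' => hr' ⟨x, h'⟩⟩
  rw [this]
  exact Metric.isClosed_closedBall

/-- A countable clopen cover has a continuous selection of an index (the least one). -/
theorem exists_continuous_index {U : ℕ → Set X} (hU : ∀ n, IsClopen (U n))
    (hcov : ∀ x, ∃ n, x ∈ U n) : ∃ p : X → ℕ, Continuous p ∧ ∀ x, x ∈ U (p x) := by
  classical
  refine ⟨fun x => Nat.find (hcov x), ?_, fun x => Nat.find_spec (hcov x)⟩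
  refine continuous_discrete_rng.2 fun n => ?_
  have : (fun x => Nat.find (hcov x)) ⁻¹' {n} = U n ∩ ⋂ m : Fin n, (U m)ᶜ := by
    ext x
    simp only [mem_preimage, mem_singleton_iff, Nat.find_eq_iff, mem_inter_iff, mem_iInter,
      mem_compl_iff]
    exact and_congr_right fun _ => ⟨fun h m => h m m.2, fun h m hm => h ⟨m, hm⟩⟩
  rw [this]
  exact (hU n).isOpen.inter (isOpen_iInter_of_finite fun m => (hU m).compl.isOpen)

/-- Partitions into countably many clopen sets of small diameter. -/
theorem CantorEmbeddable.exists_partition {X : Type*} [MetricSpace X] (hX : CantorEmbeddable X)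
    {ε : ℝ} (hε : 0 < ε) :
    ∃ p : X → ℕ, Continuous p ∧ ∀ x y, p x = p y → dist x y < ε := by
  rcases isEmpty_or_nonempty X with hne | ⟨⟨x₀⟩⟩
  · exact ⟨fun _ => 0, continuous_const, fun x => (hne.false x).elim⟩
  have := hX.secondCountableTopology
  choose V hV hxV hVb using fun x : X =>
    hX.exists_isClopen (Metric.ball_mem_nhds x (half_pos hε))
  obtain ⟨s, hs, hsU⟩ := TopologicalSpace.countable_cover_nhds
    fun x => (hV x).isOpen.mem_nhds (hxV x)
  have hsne : s.Nonempty := by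
    obtain ⟨i, hi⟩ := mem_iUnion.1 (hsU.symm ▸ mem_univ x₀ : x₀ ∈ ⋃ x ∈ s, V x)
    obtain ⟨hi, -⟩ := mem_iUnion.1 hi
    exact ⟨i, hi⟩
  obtain ⟨g, rfl⟩ := hs.exists_eq_range hsne
  obtain ⟨p, hp, hpU⟩ := exists_continuous_index (U := fun n => V (g n)) (fun n => hV _) (by
    intro x
    have : x ∈ ⋃ y ∈ range g, V y := hsU.symm ▸ mem_univ x
    simpa using this)
  refine ⟨p, hp, fun x y hxy => ?_⟩
  have h₁ := hVb _ (hpU x)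
  have h₂ := hVb _ (hpU y)
  rw [← hxy] at h₂
  rw [Metric.mem_ball] at h₁ h₂
  linarith [dist_triangle_right x y (g (p x))]

end CantorEmbeddable

/-! ### Scattered decompositions -/

section Scatter

variable {X : Type*} [TopologicalSpace X]

/-- `ScatteredOn 𝒱 W`: the set `W` is open and carries a function into `ℕ` whose fibers belong to
`𝒱` and which is constant on some nonempty relatively open piece of every nonempty subset
of `W`. -/
def ScatteredOn (𝒱 : Set X → Prop) (W : Set X) : Prop :=
  IsOpen W ∧ ∃ k : X → ℕ,
    (∀ A ⊆ W, A.Nonempty → ∃ V, IsOpen V ∧ (A ∩ V).Nonempty ∧ ∃ i, ∀ x ∈ A ∩ V, k x = i) ∧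
    ∀ i, 𝒱 (W ∩ k ⁻¹' {i})

theorem ScatteredOn.iUnion {𝒱 : Set X → Prop} (h𝒱 : ∀ S F, 𝒱 S → IsClosed F → 𝒱 (S ∩ F))
    {W : ℕ → Set X} (hW : ∀ n, ScatteredOn 𝒱 (W n)) : ScatteredOn 𝒱 (⋃ n, W n) := by
  classical
  choose hWo k hk hkf using hW
  refine ⟨isOpen_iUnion hWo, ?_⟩
  let j : X → ℕ := fun x => if h : ∃ n, x ∈ W n then Nat.find h else 0
  have hj : ∀ n x, x ∈ W n → (∀ m < n, x ∉ W m) → j x = n := by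
    intro n x hx hlt
    have h : ∃ n, x ∈ W n := ⟨n, hx⟩
    simp only [j, dif_pos h]
    exact (Nat.find_eq_iff h).2 ⟨hx, hlt⟩
  have hj' : ∀ x ∈ ⋃ n, W n, x ∈ W (j x) ∧ ∀ m < j x, x ∉ W m := by
    intro x hx
    have h : ∃ n, x ∈ W n := mem_iUnion.1 hx
    simp only [j, dif_pos h]
    exact ⟨Nat.find_spec h, fun m hm => Nat.find_min h hm⟩
  refine ⟨fun x => Nat.pair (j x) (k (j x) x), ?_, ?_⟩
  · intro A hA hne
    have hex : ∃ n, (A ∩ W n).Nonempty := by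
      obtain ⟨x, hx⟩ := hne
      obtain ⟨n, hn⟩ := mem_iUnion.1 (hA hx)
      exact ⟨n, x, hx, hn⟩
    obtain ⟨n, hn, hmin⟩ : ∃ n, (A ∩ W n).Nonempty ∧ ∀ m < n, ¬ (A ∩ W m).Nonempty :=
      ⟨Nat.find hex, Nat.find_spec hex, fun m hm => Nat.find_min hex hm⟩
    obtain ⟨V, hV, hVne, i, hi⟩ := hk n (A ∩ W n) inter_subset_right hn
    refine ⟨W n ∩ V, (hWo n).inter hV, by rwa [← inter_assoc], Nat.pair n i, ?_⟩
    rintro x ⟨hxA, hxW, hxV⟩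
    have : j x = n := hj n x hxW fun m hm hxm => hmin m hm ⟨x, hxA, hxm⟩
    simp only [this, hi x ⟨⟨hxA, hxW⟩, hxV⟩]
  · intro i
    have : (⋃ n, W n) ∩ (fun x => Nat.pair (j x) (k (j x) x)) ⁻¹' {i} =
        (W i.unpair.1 ∩ k i.unpair.1 ⁻¹' {i.unpair.2}) ∩ (⋃ m : Fin i.unpair.1, W m)ᶜ := by
      ext x
      simp only [mem_inter_iff, mem_preimage, mem_singleton_iff, mem_compl_iff]
      constructor
      · rintro ⟨hx, rfl⟩
        obtain ⟨h₁, h₂⟩ := hj' x hx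
        simp only [Nat.unpair_pair, and_true]
        refine ⟨h₁, fun hm => ?_⟩
        obtain ⟨⟨m, hlt⟩, hm⟩ := mem_iUnion.1 hm
        rw [Nat.unpair_pair] at hlt
        exact h₂ m hlt hm
      · rintro ⟨⟨hx, hkx⟩, hn⟩
        have hjx := hj _ x hx fun m hm hxm => hn (mem_iUnion.2 ⟨⟨m, hm⟩, hxm⟩)
        refine ⟨mem_iUnion.2 ⟨_, hx⟩, ?_⟩
        rw [hjx, hkx, Nat.pair_unpair]
    rw [this]
    exact h𝒱 _ _ (hkf _ _) (isOpen_iUnion fun m => hWo _).isClosed_compl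

/-- A Cantor–Bendixson dichotomy, phrased without ordinals.  Either the space decomposes, in a
scattered way, into countably many pieces from `𝒱`, or there is a nonempty closed set none of
whose nonempty relatively open subsets is in `𝒱`.  The complement of the latter is the largest
scattered open set. -/
theorem exists_scattered_or_kernel [SecondCountableTopology X] (𝒱 : Set X → Prop)
    (h₀ : 𝒱 ∅) (h𝒱 : ∀ S F, 𝒱 S → IsClosed F → 𝒱 (S ∩ F)) :
    (∃ k : X → ℕ, (∀ A : Set X, A.Nonempty → ∃ V, IsOpen V ∧ (A ∩ V).Nonempty ∧
      ∃ i, ∀ x ∈ A ∩ V, k x = i) ∧ ∀ i, 𝒱 (k ⁻¹' {i})) ∨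
    ∃ K : Set X, IsClosed K ∧ K.Nonempty ∧ ∀ V, IsOpen V → (K ∩ V).Nonempty → ¬ 𝒱 (K ∩ V) := by
  classical
  by_contra! hcon
  obtain ⟨hcon₁, hcon₂⟩ := hcon
  have hempty : ScatteredOn 𝒱 ∅ :=
    ⟨isOpen_empty, fun _ => 0, fun A hA hne => absurd (hne.mono hA) (by simp), by simpa using h₀⟩
  obtain ⟨W, hW, hmax⟩ : ∃ W, ScatteredOn 𝒱 W ∧ ∀ W', ScatteredOn 𝒱 W' → W' ⊆ W := by
    obtain ⟨T, hTc, hTs, hTU⟩ := TopologicalSpace.isOpen_sUnion_countable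
      {W | ScatteredOn 𝒱 W} fun W hW => hW.1
    obtain ⟨w, hw⟩ := (hTc.insert ∅).exists_eq_range ⟨∅, mem_insert _ _⟩
    refine ⟨⋃ n, w n, .iUnion h𝒱 fun n => ?_, fun W' hW' => ?_⟩
    · have : w n ∈ insert ∅ T := hw ▸ mem_range_self n
      rcases this with h | h
      · rw [h]; exact hempty
      · exact hTs h
    · rw [← sUnion_range, ← hw, sUnion_insert, empty_union, hTU]
      exact subset_sUnion_of_mem hW'
  obtain ⟨hWo, k, hk, hkf⟩ := id hW
  by_cases huniv : W = univ
  · subst huniv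
    obtain ⟨i, hi⟩ := hcon₁ k fun A hA => by
      obtain ⟨V, hV, hne, i, hi⟩ := hk A (subset_univ A) hA
      exact ⟨V, hV, hne, i, hi⟩
    exact hi (by simpa using hkf i)
  · obtain ⟨V, hV, ⟨x, hxW, hxV⟩, hWV⟩ := hcon₂ Wᶜ hWo.isClosed_compl (nonempty_compl.2 huniv)
    refine hxW (hmax (W ∪ V) ⟨hWo.union hV, fun x => if x ∈ W then k x + 1 else 0, ?_, ?_⟩
      (Or.inr hxV))
    · intro A hA hne
      by_cases hAW : (A ∩ W).Nonempty
      · obtain ⟨V', hV', hne', i, hi⟩ := hk (A ∩ W) inter_subset_right hAW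
        refine ⟨W ∩ V', hWo.inter hV', by rwa [← inter_assoc], i + 1, ?_⟩
        rintro y ⟨hyA, hyW, hyV⟩
        simp only [if_pos hyW, hi y ⟨⟨hyA, hyW⟩, hyV⟩]
      · refine ⟨univ, isOpen_univ, by simpa using hne, 0, ?_⟩
        rintro y ⟨hyA, -⟩
        exact if_neg fun hyW => hAW ⟨y, hyA, hyW⟩
    · rintro (_ | i)
      · convert hWV using 1
        ext y
        by_cases hy : y ∈ W <;> simp [hy]
      · convert hkf i using 1
        ext y
        by_cases hy : y ∈ W <;> simp [hy]

end Scatter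

/-! ### Polish and σ-compact subspaces -/

section Subspaces

variable {X : Type*} [TopologicalSpace X]

theorem PolishSpace.of_inter_isClosed {S F : Set X} (hS : PolishSpace ↥S) (hF : IsClosed F) :
    PolishSpace ↥(S ∩ F) := by
  have h : IsClosedEmbedding (inclusion (inter_subset_left : S ∩ F ⊆ S)) := by
    refine ⟨.inclusion _, ?_⟩
    convert hF.preimage (continuous_subtype_val : Continuous (Subtype.val : ↥S → X)) using 1
    ext x
    simp
  exact h.polishSpace

theorem PolishSpace.of_inter_isOpen {S V : Set X} (hS : PolishSpace ↥S) (hV : IsOpen V) :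
    PolishSpace ↥(S ∩ V) := by
  have h : IsEmbedding (inclusion (inter_subset_left : S ∩ V ⊆ S)) := .inclusion _
  have hr : IsOpen (range (inclusion (inter_subset_left : S ∩ V ⊆ S))) := by
    convert hV.preimage (continuous_subtype_val : Continuous (Subtype.val : ↥S → X)) using 1
    ext x
    simp
  have := hr.polishSpace
  exact h.toHomeomorph.isClosedEmbedding.polishSpace

theorem IsSigmaCompact.inter_isClosed {S F : Set X} (hS : IsSigmaCompact S) (hF : IsClosed F) :
    IsSigmaCompact (S ∩ F) := by
  obtain ⟨K, hK, rfl⟩ := hS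
  rw [iUnion_inter]
  exact isSigmaCompact_iUnion_of_isCompact _ fun n => (hK n).inter_right hF

theorem IsSigmaCompact.inter_isOpen [TopologicalSpace.MetrizableSpace X] {S V : Set X}
    (hS : IsSigmaCompact S) (hV : IsOpen V) : IsSigmaCompact (S ∩ V) := by
  let := TopologicalSpace.metrizableSpaceMetric X
  obtain ⟨F, hF, -, hFV, -⟩ := hV.exists_iUnion_isClosed
  rw [← hFV, inter_iUnion]
  exact isSigmaCompact_iUnion _ fun n => hS.inter_isClosed (hF n)

/-- Baire category for a Polish subspace `S` covered by countably many closed sets of the ambient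
space: some open set meets `S` in a nonempty part of a single one of them. -/
theorem exists_inter_subset_of_polishSpace {S : Set X} (hS : PolishSpace ↥S) (hne : S.Nonempty)
    {F : ℕ → Set X} (hF : ∀ n, IsClosed (F n)) (hSF : S ⊆ ⋃ n, F n) :
    ∃ n V, IsOpen V ∧ (S ∩ V).Nonempty ∧ S ∩ V ⊆ F n := by
  have : Nonempty ↥S := hne.to_subtype
  let := TopologicalSpace.upgradeIsCompletelyMetrizable ↥S
  obtain ⟨n, x, hx⟩ := nonempty_interior_of_iUnion_of_closed
    (f := fun n => (Subtype.val : ↥S → X) ⁻¹' F n) (fun n => (hF n).preimage continuous_subtype_val)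
    (by
      refine eq_univ_of_forall fun x => ?_
      simpa using hSF x.2)
  obtain ⟨U, hUF, hU, hxU⟩ := mem_interior.1 hx
  obtain ⟨V, hV, rfl⟩ := isOpen_induced_iff.1 hU
  exact ⟨n, V, hV, ⟨x, x.2, hxU⟩, fun y hy => hUF (show (⟨y, hy.1⟩ : ↥S) ∈ _ from hy.2)⟩

end Subspaces

/-! ### Polish spaces and the Baire space -/

/-- The sequence of indices relative to partitions of vanishing mesh, for a complete metric,
is a closed embedding into the Baire space. -/
theorem CantorEmbeddable.exists_isClosedEmbedding_baire {X : Type*} [TopologicalSpace X]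
    [PolishSpace X] (hX : CantorEmbeddable X) : ∃ f : X → (ℕ → ℕ), IsClosedEmbedding f := by
  let := TopologicalSpace.upgradeIsCompletelyMetrizable X
  choose p hp hpd using fun n : ℕ =>
    hX.exists_partition (ε := 1 / ((n : ℝ) + 1)) Nat.one_div_pos_of_nat
  have hc : Continuous fun x n => p n x := continuous_pi hp
  refine ⟨fun x n => p n x, .of_continuous_injective_isClosedMap hc ?_ ?_⟩
  · intro x y hxy
    refine eq_of_forall_dist_le fun ε hε => ?_
    obtain ⟨n, hn⟩ := exists_nat_one_div_lt hε
    exact (hpd n x y (congrFun hxy n)).le.trans hn.le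
  · intro A hA
    refine isClosed_of_closure_subset fun y hy => ?_
    obtain ⟨u, hu, hlim⟩ := mem_closure_iff_seq_limit.1 hy
    choose x hxA hxu using hu
    have hev : ∀ n, ∀ᶠ m in Filter.atTop, p n (x m) = y n := by
      intro n
      have h₁ : Filter.Tendsto (fun m => u m n) Filter.atTop (𝓝 (y n)) :=
        (tendsto_pi_nhds.1 hlim) n
      rw [nhds_discrete, Filter.tendsto_pure] at h₁
      filter_upwards [h₁] with m hm
      rw [← hm, ← hxu]
    have hcau : CauchySeq x := by
      refine Metric.cauchySeq_iff'.2 fun ε hε => ?_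
      obtain ⟨n, hn⟩ := exists_nat_one_div_lt hε
      obtain ⟨N, hN⟩ := Filter.eventually_atTop.1 (hev n)
      exact ⟨N, fun m hm => (hpd n _ _ ((hN m hm).trans (hN N le_rfl).symm)).trans hn⟩
    obtain ⟨z, hz⟩ := cauchySeq_tendsto_of_complete hcau
    refine ⟨z, hA.mem_of_tendsto hz (Filter.Eventually.of_forall hxA), ?_⟩
    refine tendsto_nhds_unique ((hc.tendsto z).comp hz) ?_
    convert hlim using 1
    exact funext hxu

/-- A σ-compact Polish subspace `S` of a Hausdorff space is resolvable.  If both `S ∩ A` and `A \ S`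
were dense in `A`, the Baire category theorem in `S ∩ closure A` would place a nonempty relatively
open part of `A` inside a compact subset of `S`. -/
theorem resolvable_of_polishSpace_of_isSigmaCompact {X : Type*} [TopologicalSpace X] [T2Space X]
    {S : Set X} (hS : PolishSpace ↥S) (hσ : IsSigmaCompact S) : Resolvable S := by
  obtain ⟨K, hK, hKS⟩ := hσ
  intro A hA
  by_contra! hcon
  have hne : (S ∩ closure A).Nonempty := by
    obtain ⟨x, hx, hxS⟩ := not_subset.1 (hcon univ isOpen_univ (by simpa using hA)).2
    exact ⟨x, not_not.1 hxS, subset_closure hx.1⟩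
  obtain ⟨n, V, hV, ⟨z, hz, hzV⟩, hsub⟩ := exists_inter_subset_of_polishSpace
    (hS.of_inter_isClosed isClosed_closure) hne (fun n => (hK n).isClosed)
    (inter_subset_left.trans hKS.ge)
  have hAV : A ∩ V ⊆ K n := by
    intro y hy
    rw [← (hK n).isClosed.closure_eq, mem_closure_iff]
    intro U hU hyU
    obtain ⟨w, ⟨hwA, hwV, hwU⟩, hwS⟩ :=
      not_subset.1 (hcon (V ∩ U) (hV.inter hU) ⟨y, hy.1, hy.2, hyU⟩).2
    exact ⟨w, hwU, hsub ⟨⟨not_not.1 hwS, subset_closure hwA⟩, hwV⟩⟩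
  have hAVne : (A ∩ V).Nonempty := by
    obtain ⟨y, hyV, hyA⟩ := mem_closure_iff.1 hz.2 V hV hzV
    exact ⟨y, hyA, hyV⟩
  exact (hcon V hV hAVne).1 (hAV.trans (hKS ▸ subset_iUnion K n))

theorem CantorEmbeddable.summand_cantor {X : Type} [TopologicalSpace X] [PolishSpace X]
    [SigmaCompactSpace X] (hX : CantorEmbeddable X) : Summand X (ℕ → Bool) := by
  obtain ⟨c, hc⟩ := hX
  refine hc.summand (resolvable_of_polishSpace_of_isSigmaCompact ?_ ?_)
  · exact hc.toHomeomorph.symm.isClosedEmbedding.polishSpace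
  · exact isSigmaCompact_range hc.continuous

theorem CantorEmbeddable.summand_baire {X : Type} [TopologicalSpace X] [PolishSpace X]
    (hX : CantorEmbeddable X) : Summand X (ℕ → ℕ) := by
  obtain ⟨f, hf⟩ := hX.exists_isClosedEmbedding_baire
  exact hf.summand

/-- A noncompact clopen set in a complete metric space is not totally bounded, hence splits into
infinitely many clopen pieces of prescribed mesh. -/
theorem CantorEmbeddable.exists_split {M : Type*} [MetricSpace M] [CompleteSpace M]
    (hM : CantorEmbeddable M) {O : Set M} (hO : IsClopen O) (hOc : ¬ IsCompact O)
    {ε : ℝ} (hε : 0 < ε) :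
    ∃ u : ℕ → Set M, (∀ n, IsClopen (u n) ∧ (u n).Nonempty) ∧ Pairwise (Disjoint on u) ∧
      (⋃ n, u n) = O ∧ ∀ n, ∀ x ∈ u n, ∀ y ∈ u n, dist x y < ε := by
  have htb : ¬ TotallyBounded O := fun h =>
    hOc (isCompact_iff_totallyBounded_isComplete.2 ⟨h, hO.isClosed.isComplete⟩)
  rw [Metric.totallyBounded_iff] at htb
  push Not at htb
  obtain ⟨δ, hδ, hδO⟩ := htb
  obtain ⟨p, hp, hpd⟩ := hM.exists_partition (lt_min hε hδ)
  have hinf : (p '' O).Infinite := by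
    intro hfin
    have := hfin.to_subtype
    choose y hyO hyp using fun n : ↥(p '' O) => n.2
    refine hδO (range y) (finite_range y) fun x hx => ?_
    simp only [mem_iUnion]
    refine ⟨y ⟨p x, mem_image_of_mem p hx⟩, mem_range_self _, ?_⟩
    exact (hpd x _ (hyp ⟨p x, mem_image_of_mem p hx⟩).symm).trans_le (min_le_right _ _)
  have := hinf.to_subtype
  obtain ⟨e⟩ : Nonempty (ℕ ≃ ↥(p '' O)) := nonempty_equiv_of_countable
  refine ⟨fun n => O ∩ p ⁻¹' {(e n : ℕ)}, fun n => ⟨?_, ?_⟩, ?_, ?_, ?_⟩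
  · exact hO.inter ((isClopen_discrete _).preimage hp)
  · obtain ⟨x, hx, hxe⟩ := (e n).2
    exact ⟨x, hx, hxe⟩
  · intro n m hnm
    refine disjoint_left.2 fun x hx hx' => hnm (e.injective (Subtype.ext ?_))
    exact (hx.2 : p x = _).symm.trans hx'.2
  · rw [← inter_iUnion]
    refine inter_eq_left.2 fun x hx => mem_iUnion.2 ⟨e.symm ⟨p x, mem_image_of_mem p hx⟩, ?_⟩
    simp
  · intro n x hx y hy
    exact (hpd x y ((hx.2 : p x = _).trans (hy.2 : p y = _).symm)).trans_le (min_le_left _ _)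

open CantorScheme PiNat in
/-- A nonempty zero-dimensional Polish space without nonempty compact open subsets contains
(in fact is) a closed copy of the Baire space: repeatedly splitting clopen sets into infinitely many
clopen pieces gives a scheme indexed by finite sequences of natural numbers. -/
theorem CantorEmbeddable.exists_isClosedEmbedding_of_noncompact {M : Type*} [TopologicalSpace M]
    [PolishSpace M] [Nonempty M] (hM : CantorEmbeddable M)
    (hnc : ∀ O : Set M, IsOpen O → O.Nonempty → ¬ IsCompact O) :
    ∃ f : (ℕ → ℕ) → M, IsClosedEmbedding f := by
  let := TopologicalSpace.upgradeIsCompletelyMetrizable M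
  choose u hu hdisj hU hd using fun (n : ℕ) (O : {O : Set M // IsClopen O ∧ O.Nonempty}) =>
    hM.exists_split O.2.1 (hnc O O.2.1.isOpen O.2.2) (ε := 1 / ((n : ℝ) + 1))
      Nat.one_div_pos_of_nat
  let O : List ℕ → {O : Set M // IsClopen O ∧ O.Nonempty} := fun s =>
    List.rec ⟨univ, isClopen_univ, univ_nonempty⟩ (fun i s O => ⟨u s.length O i, hu _ O i⟩) s
  have hO : ∀ i s, (O (i :: s) : Set M) = u s.length (O s) i := fun i s => rfl
  let A : List ℕ → Set M := fun s => (O s).1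
  have hanti : ClosureAntitone A := by
    refine CantorScheme.Antitone.closureAntitone (fun s i => ?_) fun s => (O s).2.1.isClosed
    exact (subset_iUnion _ i).trans (hU s.length (O s)).subset
  have hA : CantorScheme.Disjoint A := fun s i j hij => hdisj s.length (O s) hij
  have hdist : ∀ x n, ∀ y ∈ A (res x (n + 1)), ∀ z ∈ A (res x (n + 1)),
      dist y z < 1 / ((n : ℝ) + 1) := by
    intro x n y hy z hz
    have := hd (res x n).length (O (res x n)) (x n) y hy z hz
    rwa [res_length] at this
  have hvan : VanishingDiam A := by
    intro x
    refine (Filter.tendsto_add_atTop_iff_nat 1).1 ?_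
    have h₁ : Filter.Tendsto (fun n : ℕ => ENNReal.ofReal (1 / ((n : ℝ) + 1))) Filter.atTop
        (𝓝 0) := by
      rw [← ENNReal.ofReal_zero]
      exact ENNReal.tendsto_ofReal tendsto_one_div_add_atTop_nhds_zero_nat
    refine tendsto_of_tendsto_of_tendsto_of_le_of_le tendsto_const_nhds h₁ (fun _ => zero_le) ?_
    intro n
    refine Metric.ediam_le fun y hy z hz => ?_
    rw [edist_dist]
    exact ENNReal.ofReal_le_ofReal (hdist x n y hy z hz).le
  have hdom : (inducedMap A).1 = univ := hanti.map_of_vanishingDiam hvan fun s => (O s).2.2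
  let f : (ℕ → ℕ) → M := fun x => (inducedMap A).2 ⟨x, hdom ▸ mem_univ x⟩
  have hf : ∀ x n, f x ∈ A (res x n) := fun x n => map_mem ⟨x, hdom ▸ mem_univ x⟩ n
  have hfc : Continuous f := hvan.map_continuous.comp (continuous_id.subtype_mk _)
  have hres : ∀ n x y, f y ∈ A (res x n) → res y n = res x n := by
    intro n
    induction n with
    | zero => intros; rfl
    | succ n ih =>
      intro x y hy
      have h₁ := ih x y (hanti.antitone _ _ hy)
      have h₂ := hf y (n + 1)
      rw [res_succ, h₁] at h₂
      rw [res_succ, res_succ, h₁]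
      by_contra hne
      exact disjoint_left.1 (hA (res x n) (fun h : y n = x n => hne (by rw [h]))) h₂ hy
  have hind : IsInducing f := by
    refine isInducing_iff_nhds.2 fun x => le_antisymm (hfc.tendsto x).le_comap fun N hN => ?_
    obtain ⟨V, ⟨y, n, rfl⟩, hxV, hVN⟩ :=
      (PiNat.isTopologicalBasis_cylinders fun _ : ℕ => ℕ).mem_nhds_iff.1 hN
    refine ⟨A (res x n), (O (res x n)).2.1.isOpen.mem_nhds (hf x n), fun z hz => hVN ?_⟩
    have h₁ := hres n x z hz
    rw [cylinder_eq_res] at hxV ⊢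
    exact h₁.trans hxV
  have hsurj : ∀ y, ∃ x, f x = y := by
    intro y
    have hstep : ∀ s : {s // y ∈ A s}, ∃ i, y ∈ A (i :: s.1) := by
      rintro ⟨s, hs⟩
      have : y ∈ ⋃ i, u s.length (O s) i := (hU s.length (O s)).symm ▸ hs
      exact mem_iUnion.1 this
    choose i hi using hstep
    let s : ℕ → {s // y ∈ A s} := fun n =>
      Nat.rec ⟨[], mem_univ y⟩ (fun _ s => ⟨i s :: s.1, hi s⟩) n
    have hs : ∀ n, res (fun n => i (s n)) n = (s n).1 := by
      intro n
      induction n with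
      | zero => rfl
      | succ n ih => rw [res_succ, ih]
    refine ⟨fun n => i (s n), eq_of_forall_dist_le fun ε hε => ?_⟩
    obtain ⟨n, hn⟩ := exists_nat_one_div_lt hε
    refine (hdist _ n _ (hf _ (n + 1)) y ?_).le.trans hn.le
    rw [hs]
    exact (s (n + 1)).2
  refine ⟨f, hind.isEmbedding, ?_⟩
  rw [range_eq_univ.2 hsurj]
  exact isClosed_univ

/-- Hurewicz: a zero-dimensional Polish space that is not σ-compact contains a closed copy of the
Baire space, inside the kernel left after removing all σ-compact open pieces. -/
theorem CantorEmbeddable.exists_baire_isClosedEmbedding {M : Type*} [TopologicalSpace M]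
    [PolishSpace M] (hM : CantorEmbeddable M) (hσ : ¬ IsSigmaCompact (univ : Set M)) :
    ∃ f : (ℕ → ℕ) → M, IsClosedEmbedding f := by
  rcases exists_scattered_or_kernel (X := M) IsSigmaCompact isSigmaCompact_empty
    fun S F hS hF => hS.inter_isClosed hF with ⟨k, -, hk⟩ | ⟨K, hK, hKne, hbad⟩
  · refine absurd ?_ hσ
    have : (univ : Set M) = ⋃ i, k ⁻¹' {i} := by ext; simp
    rw [this]
    exact isSigmaCompact_iUnion _ hk
  · have := hK.polishSpace
    have := hKne.to_subtype
    obtain ⟨f, hf⟩ := (hM.subtype K).exists_isClosedEmbedding_of_noncompact (by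
      rintro O hO ⟨x, hx⟩ hc
      obtain ⟨V, hV, rfl⟩ := isOpen_induced_iff.1 hO
      refine hbad V hV ⟨x, x.2, hx⟩ ?_
      have := (hc.image continuous_subtype_val).isSigmaCompact
      rwa [Subtype.image_preimage_coe] at this)
    exact ⟨_, hK.isClosedEmbedding_subtypeVal.comp hf⟩

/-! ### Closed embeddings built from closed pieces: one step -/

section Step

variable {D E : Type*} [TopologicalSpace D] [TopologicalSpace E]

open PiNat in
theorem isClopen_setOf_res_eq (l : List Bool) :
    IsClopen {f : ℕ → Bool | res f l.length = l} := by
  induction l with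
  | nil => simp [isClopen_univ]
  | cons a l ih =>
    have hc : Continuous fun f : ℕ → Bool => f l.length := continuous_apply _
    convert ((isClopen_discrete {a}).preimage hc).inter ih using 1
    ext f
    simp [res_succ]

open PiNat in
/-- The complement in `W` of a nonempty closed set `Z` splits into clopen sets that shrink
towards `Z`: each piece `Wc i` has a companion point `r i ∈ Z` such that points and pieces
accumulate in the same places.  The pieces are traces of the maximal basic clopen subsets of the
Cantor space that miss `Z`. -/
theorem CantorEmbeddable.exists_shrinking_partition (hD : CantorEmbeddable D) {W Z : Set D}
    (hW : IsClopen W) (hZ : IsClosed Z) (hZne : Z.Nonempty) :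
    ∃ (Wc : ℕ → Set D) (r : ℕ → D), (∀ i, IsClopen (Wc i)) ∧ Pairwise (Disjoint on Wc) ∧
      (⋃ i, Wc i) = W \ Z ∧ (∀ i, r i ∈ Z) ∧
      ∀ z, ∀ N ∈ 𝓝 z, ∃ N' ∈ 𝓝 z, N' ⊆ N ∧
        ∀ᶠ i in Filter.cofinite, ∀ x ∈ Wc i, (x ∈ N' ↔ r i ∈ N') := by
  classical
  obtain ⟨c, hc⟩ := hD
  let T : List Bool → Set D := fun l => {x | res (c x) l.length = l}
  have hT : ∀ l, IsClopen (T l) := fun l => (isClopen_setOf_res_eq l).preimage hc.continuous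
  have hxT : ∀ x n, x ∈ T (res (c x) n) := fun x n => by simp [T]
  have hTnhds : ∀ x, ∀ N ∈ 𝓝 x, ∃ n, T (res (c x) n) ⊆ N := by
    intro x N hN
    rw [hc.isInducing.nhds_eq_comap] at hN
    obtain ⟨M, hM, hMN⟩ := hN
    obtain ⟨V, ⟨y, n, rfl⟩, hxV, hVM⟩ :=
      (PiNat.isTopologicalBasis_cylinders fun _ : ℕ => Bool).mem_nhds_iff.1 hM
    refine ⟨n, fun z hz => hMN (hVM ?_)⟩
    rw [cylinder_eq_res] at hxV ⊢
    have : res (c z) n = res (c x) n := by simpa [T] using hz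
    exact this.trans hxV
  -- being in the same basic set of level `n` only depends on the basic set of level `m ≥ n`
  have hres : ∀ {x y : D} {m n : ℕ}, n ≤ m → res (c x) m = res (c y) m →
      res (c x) n = res (c y) n := by
    intro x y m n hnm h
    rw [res_eq_res] at h ⊢
    exact fun k hk => h (hk.trans_le hnm)
  have htail : ∀ x n, (res (c x) n).tail = res (c x) (n - 1) := by
    intro x n
    cases n <;> simp [res_succ]
  let P : List Bool → Prop := fun l => Disjoint Z (T l) ∧ (Z ∩ T l.tail).Nonempty
  let V : List Bool → Set D := fun l => if P l then W ∩ T l else ∅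
  have hV : ∀ l x, x ∈ V l ↔ P l ∧ x ∈ W ∧ x ∈ T l := by
    intro l x
    by_cases h : P l <;> simp [V, h]
  have hr : ∀ l, ∃ z ∈ Z, P l → z ∈ T l.tail := by
    intro l
    by_cases h : P l
    · obtain ⟨z, hz, hzT⟩ := h.2
      exact ⟨z, hz, fun _ => hzT⟩
    · exact ⟨hZne.some, hZne.some_mem, fun h' => absurd h' h⟩
  choose r hrZ hrT using hr
  have hVclopen : ∀ l, IsClopen (V l) := by
    intro l
    by_cases h : P l
    · simp only [V, if_pos h]; exact hW.inter (hT l)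
    · simp only [V, if_neg h]; exact isClopen_empty
  have hlen : ∀ l m x, x ∈ V l → x ∈ V m → ¬ l.length < m.length := by
    intro l m x hx hx' hlt
    rw [hV] at hx hx'
    obtain ⟨⟨hdisj, -⟩, -, hxl⟩ := hx
    obtain ⟨⟨-, z, hz, hzm⟩, -, hxm⟩ := hx'
    refine disjoint_left.1 hdisj hz ?_
    have hxl' : res (c x) l.length = l := hxl
    have hxm' : res (c x) m.length = m := hxm
    have h₁ : m.tail = res (c x) (m.length - 1) := by rw [← htail, hxm']
    have h₂ : res (c z) (m.length - 1) = res (c x) (m.length - 1) := by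
      have : res (c z) m.tail.length = m.tail := hzm
      rwa [h₁, res_length] at this
    show res (c z) l.length = l
    rw [hres (by omega) h₂, hxl']
  have hVdisj : ∀ l m, l ≠ m → Disjoint (V l) (V m) := by
    intro l m hlm
    refine disjoint_left.2 fun x hx hx' => hlm ?_
    have hl : l.length = m.length :=
      le_antisymm (not_lt.1 (hlen m l x hx' hx)) (not_lt.1 (hlen l m x hx hx'))
    have h₁ : res (c x) l.length = l := ((hV _ _).1 hx).2.2
    have h₂ : res (c x) m.length = m := ((hV _ _).1 hx').2.2
    rw [← h₁, hl, h₂]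
  have hVU : ∀ x, x ∈ W \ Z ↔ ∃ l, x ∈ V l := by
    intro x
    constructor
    · rintro ⟨hxW, hxZ⟩
      have hex : ∃ n, Disjoint Z (T (res (c x) n)) := by
        obtain ⟨n, hn⟩ := hTnhds x Zᶜ (hZ.isOpen_compl.mem_nhds hxZ)
        exact ⟨n, disjoint_left.2 fun z hz hzT => hn hzT hz⟩
      have hpos : Nat.find hex ≠ 0 := by
        intro h0
        have := Nat.find_spec hex
        rw [h0] at this
        exact disjoint_left.1 this hZne.some_mem (by simp [T])
      refine ⟨res (c x) (Nat.find hex), (hV _ _).2 ⟨⟨Nat.find_spec hex, ?_⟩, hxW, hxT _ _⟩⟩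
      rw [htail]
      exact not_disjoint_iff_nonempty_inter.1 (Nat.find_min hex (by omega))
    · rintro ⟨l, hl⟩
      obtain ⟨⟨hd, -⟩, hxW, hxl⟩ := (hV _ _).1 hl
      exact ⟨hxW, fun hxZ => disjoint_left.1 hd hxZ hxl⟩
  obtain ⟨e⟩ : Nonempty (ℕ ≃ List Bool) := nonempty_equiv_of_countable
  refine ⟨fun i => V (e i), fun i => r (e i), fun i => hVclopen _,
    fun i j hij => hVdisj _ _ (e.injective.ne hij), ?_, fun i => hrZ _, ?_⟩
  · ext x
    rw [hVU, mem_iUnion, e.exists_congr_left]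
    simp
  · intro z N hN
    obtain ⟨n, hn⟩ := hTnhds z N hN
    refine ⟨T (res (c z) n), (hT _).isOpen.mem_nhds (hxT z n), hn, ?_⟩
    have hfin : {l : List Bool | l.length ≤ n}.Finite := List.finite_length_le Bool n
    have h₁ : ∀ᶠ l : List Bool in Filter.cofinite, n < l.length := by
      refine hfin.subset fun l hl => ?_
      simpa using hl
    filter_upwards [e.injective.tendsto_cofinite.eventually h₁] with i hi x hx
    obtain ⟨hP, hxW, hxl⟩ := (hV _ _).1 hx
    have hxl' : res (c x) (e i).length = e i := hxl
    have h₃ : (e i).tail = res (c x) ((e i).length - 1) := by rw [← htail, hxl']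
    have h₂ : res (c (r (e i))) ((e i).length - 1) = res (c x) ((e i).length - 1) := by
      have : res (c (r (e i))) (e i).tail.length = (e i).tail := hrT _ hP
      rwa [h₃, res_length] at this
    have h₄ := hres (n := n) (by omega) h₂
    simp only [T, res_length, mem_ofPred_eq, h₄]

/-- Pairwise disjoint nonempty clopen sets avoiding a closed nowhere dense set `B` and converging
to prescribed points of `B`, chosen one after another. -/
theorem CantorEmbeddable.exists_clopen_near {E : Type*} [MetricSpace E] (hE : CantorEmbeddable E)
    {O B : Set E} (hO : IsClopen O) (hB : IsClosed B) (hBi : interior B = ∅) {y : ℕ → E}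
    (hyB : ∀ i, y i ∈ B) (hyO : ∀ i, y i ∈ O) :
    ∃ Oc : ℕ → Set E, (∀ i, IsClopen (Oc i) ∧ (Oc i).Nonempty) ∧ Pairwise (Disjoint on Oc) ∧
      (∀ i, Oc i ⊆ O) ∧ (∀ i, Disjoint (Oc i) B) ∧
      ∀ i, ∀ x ∈ Oc i, dist x (y i) < 1 / ((i : ℝ) + 1) := by
  have hpick : ∀ (i : ℕ) (S : {S : Set E // IsClopen S ∧ Disjoint S B}), ∃ V : Set E,
      (IsClopen V ∧ V.Nonempty) ∧ Disjoint V S.1 ∧ V ⊆ O ∧ Disjoint V B ∧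
      ∀ x ∈ V, dist x (y i) < 1 / ((i : ℝ) + 1) := by
    rintro i ⟨S, hS, hSB⟩
    let U := O ∩ Metric.ball (y i) (1 / ((i : ℝ) + 1)) ∩ Sᶜ
    have hU : IsOpen U := (hO.isOpen.inter Metric.isOpen_ball).inter hS.compl.isOpen
    have hyU : y i ∈ U := ⟨⟨hyO i, Metric.mem_ball_self Nat.one_div_pos_of_nat⟩,
      fun h => disjoint_left.1 hSB h (hyB i)⟩
    obtain ⟨x, hxU, hxB⟩ : ∃ x ∈ U, x ∉ B := by
      by_contra! hcon
      have : y i ∈ interior B := mem_interior.2 ⟨U, hcon, hU, hyU⟩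
      simp [hBi] at this
    obtain ⟨V, hV, hxV, hVU⟩ := hE.exists_isClopen ((hU.sdiff hB).mem_nhds ⟨hxU, hxB⟩)
    exact ⟨V, ⟨hV, x, hxV⟩, disjoint_left.2 fun z hz => (hVU hz).1.2, fun z hz => (hVU hz).1.1.1,
      disjoint_left.2 fun z hz => (hVU hz).2, fun z hz => (hVU hz).1.1.2⟩
  choose V hV hVS hVO hVB hVd using hpick
  let S : ℕ → {S : Set E // IsClopen S ∧ Disjoint S B} := fun n =>
    Nat.rec ⟨∅, isClopen_empty, empty_disjoint B⟩
      (fun i S => ⟨S.1 ∪ V i S, S.2.1.union (hV i S).1, S.2.2.union_left (hVB i S)⟩) n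
  have hSmono : Monotone fun n => (S n).1 :=
    monotone_nat_of_le_succ fun n => subset_union_left
  have hVsub : ∀ n, V n (S n) ⊆ (S (n + 1)).1 := fun n => subset_union_right
  refine ⟨fun i => V i (S i), fun i => hV _ _, ?_, fun i => hVO _ _, fun i => hVB _ _,
    fun i => hVd _ _⟩
  have key : ∀ i j, i < j → Disjoint (V i (S i)) (V j (S j)) := fun i j hij =>
    ((hVS j (S j)).mono_right ((hVsub i).trans (hSmono hij))).symm
  intro i j hij
  rcases hij.lt_or_gt with h | h
  · exact key i j h
  · exact (key j i h).symm

/-- One step of the construction of a closed embedding `D → E`.  Inside the clopen sets `W ⊆ D`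
and `O ⊆ E`, the map `h` is a closed embedding of the piece `Z ⊇ F ∩ W`; the rest of `W` is cut
into clopen sets `Wc i`, to be mapped later into the clopen sets `Oc i`, which avoid `G`.
The conditions `tendsto` and `tendsto_symm` express that `Wc i` is close to `z ∈ Z` exactly when
`Oc i` is close to `h z`. -/
structure IsStep (F : Set D) (G : Set E) (W : Set D) (O : Set E) (Z : Set D) (h : D → E)
    (Wc : ℕ → Set D) (Oc : ℕ → Set E) : Prop where
  subset : Z ⊆ W
  cover : F ∩ W ⊆ Z
  injOn : InjOn h Z
  tendsto : ∀ z ∈ Z, ∀ N ∈ 𝓝 (h z), ∃ N' ∈ 𝓝 z, (∀ y ∈ Z, y ∈ N' → h y ∈ N) ∧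
    ∀ i, (Wc i ∩ N').Nonempty → Oc i ⊆ N
  tendsto_symm : ∀ z ∈ Z, ∀ N' ∈ 𝓝 z, ∃ N ∈ 𝓝 (h z), (∀ y ∈ Z, h y ∈ N → y ∈ N') ∧
    ∀ i, (Oc i ∩ N).Nonempty → Wc i ⊆ N'
  isClosed : IsClosed (h '' Z ∪ ⋃ i, Oc i)
  isClopen_left : ∀ i, IsClopen (Wc i)
  disjoint_left : Pairwise (Disjoint on Wc)
  iUnion_left : (⋃ i, Wc i) = W \ Z
  mapsTo : MapsTo h Z O
  isClopen_right : ∀ i, IsClopen (Oc i)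
  nonempty_right : ∀ i, (Wc i).Nonempty → (Oc i).Nonempty
  disjoint_right : Pairwise (Disjoint on Oc)
  subset_right : ∀ i, Oc i ⊆ O \ h '' Z
  disjoint_closed : ∀ i, Disjoint (Oc i) G

/-- A closed embedding of `Z` with nowhere dense image extends to a step: the pieces of `W \ Z`
shrinking towards `Z` are matched with clopen sets near the images of their companion points. -/
theorem exists_isStep_of_isClosedEmbedding (hD : CantorEmbeddable D) (hE : CantorEmbeddable E)
    {F : Set D} {G : Set E} {W : Set D} {O : Set E} {Z : Set D} {h : D → E}
    (hW : IsClopen W) (hO : IsClopen O) (hZW : Z ⊆ W) (hFZ : F ∩ W ⊆ Z) (hZ : IsClosed Z)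
    (hZne : Z.Nonempty) (hh : IsClosedEmbedding (Z.domRestrict h)) (hZO : MapsTo h Z O)
    (hG : IsClosed G) (hGZ : interior (h '' Z ∪ G) = ∅) :
    ∃ Wc Oc, IsStep F G W O Z h Wc Oc := by
  have := hE.metrizableSpace
  let := TopologicalSpace.metrizableSpaceMetric E
  have hL : IsClosed (h '' Z) := by
    rw [← range_domRestrict]; exact hh.isClosed_range
  obtain ⟨Wc, r, hWc, hWd, hWU, hr, hsmall⟩ := hD.exists_shrinking_partition hW hZ hZne
  obtain ⟨Oc, hOc, hOd, hOO, hOB, hOy⟩ := hE.exists_clopen_near (y := fun i => h (r i)) hO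
    (hL.union hG) hGZ (fun i => Or.inl (mem_image_of_mem h (hr i))) (fun i => hZO (hr i))
  have hsmallr : ∀ ε > 0, ∀ᶠ i : ℕ in Filter.cofinite, 1 / ((i : ℝ) + 1) < ε := by
    intro ε hε
    rw [Nat.cofinite_eq_atTop]
    exact (tendsto_order.1 tendsto_one_div_add_atTop_nhds_zero_nat).2 ε hε
  have hcont : ∀ z ∈ Z, ∀ N ∈ 𝓝 (h z), ∃ M ∈ 𝓝 z, ∀ y ∈ Z, y ∈ M → h y ∈ N := by
    intro z hz N hN
    have h₁ := hh.continuous.tendsto (⟨z, hz⟩ : ↥Z) hN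
    rw [Filter.mem_map, nhds_subtype_eq_comap] at h₁
    obtain ⟨M, hM, hMN⟩ := h₁
    exact ⟨M, hM, fun y hy hyM => hMN (show (⟨y, hy⟩ : ↥Z) ∈ _ from hyM)⟩
  have hcont' : ∀ z ∈ Z, ∀ M ∈ 𝓝 z, ∃ N ∈ 𝓝 (h z), ∀ y ∈ Z, h y ∈ N → y ∈ M := by
    intro z hz M hM
    have h₁ : (Subtype.val : ↥Z → D) ⁻¹' M ∈ 𝓝 (⟨z, hz⟩ : ↥Z) :=
      continuous_subtype_val.continuousAt hM
    rw [hh.isInducing.nhds_eq_comap] at h₁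
    obtain ⟨N, hN, hNM⟩ := h₁
    exact ⟨N, hN, fun y hy hyN => hNM (show (⟨y, hy⟩ : ↥Z) ∈ _ from hyN)⟩
  refine ⟨Wc, Oc, hZW, hFZ, ?_, ?_, ?_, ?_, hWc, hWd, hWU, hZO, fun i => (hOc i).1,
    fun i _ => (hOc i).2, hOd, fun i x hx => ⟨hOO i hx, fun hx' =>
      disjoint_left.1 (hOB i) hx (Or.inl hx')⟩, fun i => (hOB i).mono_right subset_union_right⟩
  · exact injOn_iff_injective.2 hh.injective
  · intro z hz N hN
    obtain ⟨ε, hε, hεN⟩ := Metric.mem_nhds_iff.1 hN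
    obtain ⟨M, hM, hMN⟩ := hcont z hz _ (Metric.ball_mem_nhds (h z) (half_pos hε))
    obtain ⟨N', hN', hN'M, hfin⟩ := hsmall z M hM
    have hfin' := hfin.and (hsmallr (ε / 2) (half_pos hε))
    rw [Filter.eventually_cofinite] at hfin'
    refine ⟨N' ∩ ⋂ i ∈ _, (Wc i)ᶜ, Filter.inter_mem hN'
      ((Filter.biInter_mem hfin').2 fun i _ => (hWc i).compl.isOpen.mem_nhds fun hzi => ?_), ?_, ?_⟩
    · have : z ∈ W \ Z := hWU ▸ mem_iUnion.2 ⟨i, hzi⟩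
      exact this.2 hz
    · intro y hy hyN
      exact hεN (Metric.ball_subset_ball (by linarith) (hMN y hy (hN'M hyN.1)))
    · rintro i ⟨x, hxi, hxN, hxfin⟩ e he
      have hi : (∀ x ∈ Wc i, (x ∈ N' ↔ r i ∈ N')) ∧ 1 / ((i : ℝ) + 1) < ε / 2 := by
        by_contra hcon
        exact mem_iInter₂.1 hxfin i hcon hxi
      have h₁ := hMN _ (hr i) (hN'M ((hi.1 x hxi).1 hxN))
      have h₂ := hOy i e he
      refine hεN ?_
      rw [Metric.mem_ball] at h₁ ⊢
      linarith [dist_triangle e (h (r i)) (h z), hi.2]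
  · intro z hz N' hN'
    obtain ⟨N₁, hN₁, hN₁N', hfin⟩ := hsmall z N' hN'
    obtain ⟨M, hM, hMN⟩ := hcont' z hz _ hN₁
    obtain ⟨ε, hε, hεM⟩ := Metric.mem_nhds_iff.1 hM
    have hfin' := hfin.and (hsmallr (ε / 2) (half_pos hε))
    rw [Filter.eventually_cofinite] at hfin'
    refine ⟨Metric.ball (h z) (ε / 2) ∩ ⋂ i ∈ _, (Oc i)ᶜ, Filter.inter_mem
      (Metric.ball_mem_nhds _ (half_pos hε))
      ((Filter.biInter_mem hfin').2 fun i _ => (hOc i).1.compl.isOpen.mem_nhds fun hzi => ?_),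
      ?_, ?_⟩
    · exact disjoint_left.1 (hOB i) hzi (Or.inl (mem_image_of_mem h hz))
    · intro y hy hyN
      exact hN₁N' (hMN y hy (hεM (Metric.ball_subset_ball (by linarith) hyN.1)))
    · rintro i ⟨e, hei, heN, hefin⟩ x hx
      have hi : (∀ x ∈ Wc i, (x ∈ N₁ ↔ r i ∈ N₁)) ∧ 1 / ((i : ℝ) + 1) < ε / 2 := by
        by_contra hcon
        exact mem_iInter₂.1 hefin i hcon hei
      refine hN₁N' ((hi.1 x hx).2 (hMN _ (hr i) (hεM ?_)))
      have h₂ := hOy i e hei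
      rw [Metric.mem_ball] at heN ⊢
      linarith [dist_triangle_left (h (r i)) (h z) e, hi.2]
  · rw [← isOpen_compl_iff, isOpen_iff_mem_nhds]
    intro e he
    rw [mem_compl_iff, mem_union, not_or] at he
    obtain ⟨ε, hε, hεL⟩ := Metric.mem_nhds_iff.1 (hL.isOpen_compl.mem_nhds he.1)
    have hfin' := hsmallr (ε / 2) (half_pos hε)
    rw [Filter.eventually_cofinite] at hfin'
    have hnhds : Metric.ball e (ε / 2) ∩ ⋂ i ∈ {i : ℕ | ¬ 1 / ((i : ℝ) + 1) < ε / 2}, (Oc i)ᶜ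
        ∈ 𝓝 e := Filter.inter_mem (Metric.ball_mem_nhds _ (half_pos hε))
      ((Filter.biInter_mem hfin').2 fun i _ => (hOc i).1.compl.isOpen.mem_nhds fun hei =>
        he.2 (mem_iUnion.2 ⟨i, hei⟩))
    refine Filter.mem_of_superset hnhds ?_
    rintro y ⟨hy, hyfin⟩ (hyL | hyO)
    · exact hεL (Metric.ball_subset_ball (by linarith) hy) hyL
    · obtain ⟨i, hyi⟩ := mem_iUnion.1 hyO
      have hi : 1 / ((i : ℝ) + 1) < ε / 2 := by
        by_contra hcon
        exact mem_iInter₂.1 hyfin i hcon hyi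
      refine hεL (a := h (r i)) ?_ (mem_image_of_mem h (hr i))
      have h₂ := hOy i y hyi
      rw [Metric.mem_ball] at hy ⊢
      linarith [dist_triangle_left (h (r i)) e y]

end Step

/-! ### Closed embeddings built from closed pieces: the recursion -/

section Tree

variable {α : Type*} {V K : List ℕ → Set α}

theorem subset_of_isSuffix (hV : ∀ i s, V (i :: s) ⊆ V s) {s t : List ℕ} (h : t <:+ s) :
    V s ⊆ V t := by
  obtain ⟨l, rfl⟩ := h
  induction l with
  | nil => rfl
  | cons i l ih => exact (hV i _).trans ih

/-- In a tree of sets `V s` in which the children of `s` are pairwise disjoint and avoid the core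
`K s`, the core of `s` only meets the sets attached to the ancestors of `s`. -/
theorem isSuffix_of_mem_core (hK : ∀ s, K s ⊆ V s) (hV : ∀ i s, V (i :: s) ⊆ V s \ K s)
    (hdisj : ∀ i j s, i ≠ j → Disjoint (V (i :: s)) (V (j :: s))) {s t : List ℕ} {x : α}
    (hs : x ∈ K s) (ht : x ∈ V t) : t <:+ s := by
  have hV' : ∀ i s, V (i :: s) ⊆ V s := fun i s => (hV i s).trans sdiff_subset
  induction t with
  | nil => exact List.nil_suffix
  | cons i t ih =>
    obtain ⟨l, rfl⟩ := ih (hV' i t ht)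
    rcases List.eq_nil_or_concat l with rfl | ⟨l, j, rfl⟩
    · exact absurd hs (hV i t ht).2
    · have hsuf : j :: t <:+ l.concat j ++ t := ⟨l, by simp⟩
      have hj : x ∈ V (j :: t) := subset_of_isSuffix hV' hsuf (hK _ hs)
      have : i = j := by
        by_contra hij
        exact disjoint_left.1 (hdisj i j t hij) ht hj
      rwa [this]

theorem eq_of_mem_core (hK : ∀ s, K s ⊆ V s) (hV : ∀ i s, V (i :: s) ⊆ V s \ K s)
    (hdisj : ∀ i j s, i ≠ j → Disjoint (V (i :: s)) (V (j :: s))) {s t : List ℕ} {x : α}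
    (hs : x ∈ K s) (ht : x ∈ K t) : s = t :=
  (isSuffix_of_mem_core hK hV hdisj ht (hK s hs)).eq_of_length_le
    (isSuffix_of_mem_core hK hV hdisj hs (hK t ht)).length_le

end Tree

section Engine

variable {D E : Type*} [TopologicalSpace D] [TopologicalSpace E]

/-- A Polish subspace of a space that is a countable union of closed nowhere dense sets has empty
interior, by the Baire category theorem. -/
theorem interior_eq_empty_of_polishSpace {L : Set E} (hL : PolishSpace ↥L) {G : ℕ → Set E}
    (hG : ∀ n, IsClosed (G n)) (hGi : ∀ n, interior (G n) = ∅) (hGU : ∀ e, ∃ n, e ∈ G n) :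
    interior L = ∅ := by
  by_contra hne
  have hP : PolishSpace ↥(interior L) := by
    have := hL.of_inter_isOpen (V := interior L) isOpen_interior
    rwa [inter_eq_right.2 interior_subset] at this
  obtain ⟨n, V, hV, ⟨x, hx⟩, hsub⟩ := exists_inter_subset_of_polishSpace hP
    (nonempty_iff_ne_empty.2 hne) hG fun e _ => mem_iUnion.2 (hGU e)
  have : x ∈ interior (G n) := mem_interior.2 ⟨_, hsub, isOpen_interior.inter hV, hx⟩
  simp [hGi n] at this

/-- Steps exist inside arbitrary clopen sets `W` and `O`.  The core is `F ∩ W`, or a single point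
if this set is empty. -/
theorem exists_isStep [Nonempty E] (hD : CantorEmbeddable D) (hE : CantorEmbeddable E)
    {F : Set D} (hF : IsClosed F) (hFP : PolishSpace ↥F) {G : ℕ → Set E}
    (hG : ∀ n, IsClosed (G n)) (hGi : ∀ n, interior (G n) = ∅) (hGU : ∀ e, ∃ n, e ∈ G n)
    (hemb : ∀ O : Set E, IsClopen O → O.Nonempty →
      ∃ h : ↥F → E, IsClosedEmbedding h ∧ range h ⊆ O) (n : ℕ)
    {W : Set D} {O : Set E} (hW : IsClopen W) (hO : IsClopen O) (hWO : W.Nonempty → O.Nonempty) :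
    ∃ Z h Wc Oc, IsStep F (G n) W O Z h Wc Oc := by
  classical
  have := hD.metrizableSpace
  have := hE.metrizableSpace
  rcases W.eq_empty_or_nonempty with rfl | hWne
  · refine ⟨∅, fun _ => Classical.arbitrary E, fun _ => ∅, fun _ => ∅, ?_⟩
    constructor <;> first | exact mapsTo_empty _ _ | simp [isClopen_empty, Pairwise]
  obtain ⟨Z, h, hZW, hFZ, hZ, hZne, hZP, hh, hZO⟩ : ∃ (Z : Set D) (h : D → E), Z ⊆ W ∧ F ∩ W ⊆ Z ∧
      IsClosed Z ∧ Z.Nonempty ∧ PolishSpace ↥Z ∧ IsClosedEmbedding (Z.domRestrict h) ∧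
      MapsTo h Z O := by
    by_cases hFW : (F ∩ W).Nonempty
    · obtain ⟨h₀, hh₀, hr⟩ := hemb O hO (hWO hWne)
      let h : D → E := fun x => if hx : x ∈ F then h₀ ⟨x, hx⟩ else Classical.arbitrary E
      have hh : ∀ x (hx : x ∈ F), h x = h₀ ⟨x, hx⟩ := fun x hx => dif_pos hx
      refine ⟨F ∩ W, h, inter_subset_right, subset_rfl, hF.inter hW.isClosed, hFW,
        hFP.of_inter_isOpen hW.isOpen, ?_, ?_⟩
      · have hincl : IsClosedEmbedding (inclusion (inter_subset_left : F ∩ W ⊆ F)) :=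
          .of_comp .subtypeVal (hF.inter hW.isClosed).isClosedEmbedding_subtypeVal
        convert hh₀.comp hincl using 1
        exact funext fun x => hh x x.2.1
      · intro x hx
        rw [hh x hx.1]
        exact hr (mem_range_self _)
    · obtain ⟨w, hw⟩ := hWne
      obtain ⟨e, he⟩ := hWO ⟨w, hw⟩
      refine ⟨{w}, fun _ => e, singleton_subset_iff.2 hw, ?_, isClosed_singleton,
        singleton_nonempty w, inferInstance, ?_, fun _ _ => he⟩
      · rw [not_nonempty_iff_eq_empty.1 hFW]; exact empty_subset _
      · exact .of_continuous_injective_isClosedMap continuous_const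
          (fun x y _ => Subsingleton.elim x y) fun A _ => (toFinite _).isClosed
  obtain ⟨Wc, Oc, hs⟩ := exists_isStep_of_isClosedEmbedding hD hE hW hO hZW hFZ hZ hZne hh hZO
    (hG n) (by
      have hL : IsClosed (h '' Z) := by rw [← range_domRestrict]; exact hh.isClosed_range
      rw [interior_union_isClosed_of_interior_empty hL (hGi n)]
      refine interior_eq_empty_of_polishSpace ?_ hG hGi hGU
      rw [← range_domRestrict]
      exact hh.isEmbedding.toHomeomorph.symm.isClosedEmbedding.polishSpace)
  exact ⟨Z, h, Wc, Oc, hs⟩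

/-- The main construction of closed embeddings.  Let `D` be a union of countably many closed Polish
subsets `F n`, and `E` a union of countably many closed nowhere dense subsets `G n`.  If every
`F n` admits closed embeddings into arbitrary nonempty clopen subsets of `E`, then `D` admits a
closed embedding into `E`. -/
theorem CantorEmbeddable.exists_isClosedEmbedding [Nonempty E] (hD : CantorEmbeddable D)
    (hE : CantorEmbeddable E) {F : ℕ → Set D} (hF : ∀ n, IsClosed (F n))
    (hFU : ∀ x, ∃ n, x ∈ F n) (hFP : ∀ n, PolishSpace ↥(F n)) {G : ℕ → Set E}
    (hG : ∀ n, IsClosed (G n)) (hGi : ∀ n, interior (G n) = ∅) (hGU : ∀ e, ∃ n, e ∈ G n)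
    (hemb : ∀ n, ∀ O : Set E, IsClopen O → O.Nonempty →
      ∃ h : ↥(F n) → E, IsClosedEmbedding h ∧ range h ⊆ O) :
    ∃ H : D → E, IsClosedEmbedding H := by
  let P := {p : Set D × Set E // IsClopen p.1 ∧ IsClopen p.2 ∧ (p.1.Nonempty → p.2.Nonempty)}
  choose Z' h' Wc Oc hstep using fun (n : ℕ) (p : P) =>
    exists_isStep hD hE (hF n) (hFP n) hG hGi hGU (hemb n) n p.2.1 p.2.2.1 p.2.2.2
  let N : List ℕ → P := fun s =>
    List.rec ⟨(univ, univ), isClopen_univ, isClopen_univ, fun _ => univ_nonempty⟩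
      (fun i s p => ⟨(Wc s.length p i, Oc s.length p i), (hstep _ p).isClopen_left i,
        (hstep _ p).isClopen_right i, (hstep _ p).nonempty_right i⟩) s
  let W : List ℕ → Set D := fun s => (N s).1.1
  let O : List ℕ → Set E := fun s => (N s).1.2
  let Z : List ℕ → Set D := fun s => Z' s.length (N s)
  let h : List ℕ → D → E := fun s => h' s.length (N s)
  have hS : ∀ s, IsStep (F s.length) (G s.length) (W s) (O s) (Z s) (h s)
      (fun i => W (i :: s)) (fun i => O (i :: s)) := fun s => hstep s.length (N s)
  have hWo : ∀ s, IsOpen (W s) := fun s => (N s).2.1.isOpen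
  have hOo : ∀ s, IsOpen (O s) := fun s => (N s).2.2.1.isOpen
  have hWs : ∀ i s, W (i :: s) ⊆ W s \ Z s := fun i s =>
    (hS s).iUnion_left ▸ subset_iUnion (fun i => W (i :: s)) i
  have hWd : ∀ i j s, i ≠ j → Disjoint (W (i :: s)) (W (j :: s)) :=
    fun i j s hij => (hS s).disjoint_left hij
  have hOs : ∀ i s, O (i :: s) ⊆ O s \ h s '' Z s := fun i s => (hS s).subset_right i
  have hOd : ∀ i j s, i ≠ j → Disjoint (O (i :: s)) (O (j :: s)) :=
    fun i j s hij => (hS s).disjoint_right hij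
  have hLO : ∀ s, h s '' Z s ⊆ O s := fun s => (hS s).mapsTo.image_subset
  have hcases : ∀ s, ∀ x ∈ W s, x ∈ Z s ∨ ∃ i, x ∈ W (i :: s) := by
    intro s x hx
    by_cases hxZ : x ∈ Z s
    · exact Or.inl hxZ
    · have : x ∈ ⋃ i, W (i :: s) := (hS s).iUnion_left ▸ ⟨hx, hxZ⟩
      exact Or.inr (mem_iUnion.1 this)
  -- since `x ∈ F n` for some `n`, the point `x` is caught at level `n` at the latest
  have hZU : ∀ x, ∃ s, x ∈ Z s := by
    intro x
    by_contra! hcon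
    have hlev : ∀ m, ∃ s : List ℕ, s.length = m ∧ x ∈ W s := by
      intro m
      induction m with
      | zero => exact ⟨[], rfl, mem_univ x⟩
      | succ m ih =>
        obtain ⟨s, rfl, hs⟩ := ih
        obtain ⟨i, hi⟩ := (hcases s x hs).resolve_left (hcon s)
        exact ⟨i :: s, rfl, hi⟩
    obtain ⟨n, hn⟩ := hFU x
    obtain ⟨s, rfl, hs⟩ := hlev n
    exact hcon s ((hS s).cover ⟨hn, hs⟩)
  choose σ hσ using hZU
  let H : D → E := fun x => h (σ x) x
  have hH : ∀ s, ∀ x ∈ Z s, H x = h s x := by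
    intro s x hx
    have : σ x = s := eq_of_mem_core (fun s => (hS s).subset) hWs hWd (hσ x) hx
    simp only [H, this]
  have hHL : ∀ x, H x ∈ h (σ x) '' Z (σ x) := fun x => mem_image_of_mem _ (hσ x)
  have hHW : ∀ s x, H x ∈ O s ↔ x ∈ W s := by
    intro s x
    constructor
    · intro hx
      have := isSuffix_of_mem_core hLO hOs hOd (hHL x) hx
      exact subset_of_isSuffix (fun i s => (hWs i s).trans sdiff_subset) this
        ((hS _).subset (hσ x))
    · intro hx
      have := isSuffix_of_mem_core (fun s => (hS s).subset) hWs hWd (hσ x) hx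
      exact subset_of_isSuffix (fun i s => (hOs i s).trans sdiff_subset) this (hLO _ (hHL x))
  have hcont : Continuous H := by
    refine continuous_iff_continuousAt.2 fun x M hM => ?_
    obtain ⟨N', hN', h₁, h₂⟩ := (hS (σ x)).tendsto x (hσ x) M hM
    rw [Filter.mem_map]
    refine Filter.mem_of_superset
      (Filter.inter_mem hN' ((hWo _).mem_nhds ((hS _).subset (hσ x)))) ?_
    rintro y ⟨hyN, hyW⟩
    rcases hcases _ y hyW with hy | ⟨i, hi⟩
    · rw [mem_preimage, hH _ y hy]
      exact h₁ y hy hyN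
    · exact h₂ i ⟨y, hi, hyN⟩ ((hHW (i :: σ x) y).2 hi)
  have hind : IsInducing H := by
    refine isInducing_iff_nhds.2 fun x => le_antisymm (hcont.tendsto x).le_comap fun M hM => ?_
    obtain ⟨N', hN', h₁, h₂⟩ := (hS (σ x)).tendsto_symm x (hσ x) M hM
    refine ⟨N' ∩ O (σ x), Filter.inter_mem hN' ((hOo _).mem_nhds (hLO _ (hHL x))), ?_⟩
    rintro y ⟨hyN, hyO⟩
    rcases hcases _ y ((hHW _ y).1 hyO) with hy | ⟨i, hi⟩
    · rw [hH _ y hy] at hyN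
      exact h₁ y hy hyN
    · exact h₂ i ⟨H y, (hHW (i :: σ x) y).2 hi, hyN⟩ hi
  have := hD.metrizableSpace
  refine ⟨H, hind.isEmbedding, ?_⟩
  rw [← isOpen_compl_iff, isOpen_iff_mem_nhds]
  intro e he
  -- the sets `O s` containing `e` have bounded level, as `e ∈ G n` for some `n`
  obtain ⟨s, hes, hleaf⟩ : ∃ s, e ∈ O s ∧ ∀ i, e ∉ O (i :: s) := by
    by_contra! hcon
    have hlev : ∀ m, ∃ s : List ℕ, s.length = m ∧ e ∈ O s := by
      intro m
      induction m with
      | zero => exact ⟨[], rfl, mem_univ e⟩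
      | succ m ih =>
        obtain ⟨s, rfl, hs⟩ := ih
        obtain ⟨i, hi⟩ := hcon s hs
        exact ⟨i :: s, rfl, hi⟩
    obtain ⟨n, hn⟩ := hGU e
    obtain ⟨s, rfl, hs⟩ := hlev n
    obtain ⟨i, hi⟩ := hcon s hs
    exact disjoint_left.1 ((hS s).disjoint_closed i) hi hn
  have hev : e ∉ h s '' Z s ∪ ⋃ i, O (i :: s) := by
    rintro (⟨z, hz, rfl⟩ | hi)
    · exact he ⟨z, hH s z hz⟩
    · obtain ⟨i, hi⟩ := mem_iUnion.1 hi
      exact hleaf i hi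
  refine Filter.mem_of_superset (Filter.inter_mem ((hOo s).mem_nhds hes)
    ((hS s).isClosed.isOpen_compl.mem_nhds hev)) ?_
  rintro _ ⟨hyO, hyc⟩ ⟨y, rfl⟩
  refine hyc ?_
  rcases hcases s y ((hHW s y).1 hyO) with hy | ⟨i, hi⟩
  · exact Or.inl ⟨y, hy, (hH s y hy).symm⟩
  · exact Or.inr (mem_iUnion.2 ⟨i, (hHW (i :: s) y).2 hi⟩)

end Engine

/-! ### Embedding the universal spaces -/

section Applications

instance : SigmaCompactSpace ℚ :=
  isSigmaCompact_univ_iff.1 <| by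
    rw [← biUnion_of_singleton univ]
    exact isSigmaCompact_biUnion countable_univ fun q _ => isCompact_singleton.isSigmaCompact

instance : PolishSpace (ℕ → Bool) :=
  (Continuous.isClosedEmbedding (f := fun (b : ℕ → Bool) i => (b i).toNat)
    (continuous_pi fun i => (continuous_of_discreteTopology (f := Bool.toNat)).comp
      (continuous_apply i))
    fun _ _ h => funext fun i => by simpa using congrArg (· == 1) (congrFun h i)).polishSpace

/-- The space `D` is a countable union of closed Polish subsets, each homeomorphic to a closed
subspace of `T`. -/
def PieceCover (D T : Type) [TopologicalSpace D] [TopologicalSpace T] : Prop :=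
  ∃ F : ℕ → Set D, (∀ n, IsClosed (F n)) ∧ (∀ x, ∃ n, x ∈ F n) ∧ (∀ n, PolishSpace ↥(F n)) ∧
    ∀ n, ∃ f : ↥(F n) → T, IsClosedEmbedding f

variable {D E T X : Type} [TopologicalSpace D] [TopologicalSpace E] [TopologicalSpace T]
  [TopologicalSpace X]

theorem PieceCover.exists_isClosedEmbedding [Nonempty E] (hDT : PieceCover D T)
    (hD : CantorEmbeddable D) (hE : CantorEmbeddable E) {G : ℕ → Set E}
    (hG : ∀ n, IsClosed (G n)) (hGi : ∀ n, interior (G n) = ∅) (hGU : ∀ e, ∃ n, e ∈ G n)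
    (hT : ∀ O : Set E, IsClopen O → O.Nonempty → ∃ g : T → E, IsClosedEmbedding g ∧ range g ⊆ O) :
    ∃ H : D → E, IsClosedEmbedding H := by
  obtain ⟨F, hF, hFU, hFP, hFT⟩ := hDT
  refine hD.exists_isClosedEmbedding hE hF hFU hFP hG hGi hGU fun n O hO hne => ?_
  obtain ⟨f, hf⟩ := hFT n
  obtain ⟨g, hg, hgO⟩ := hT O hO hne
  exact ⟨g ∘ f, hg.comp hf, (range_comp_subset_range f g).trans hgO⟩

theorem isClosedEmbedding_of_subsingleton [Subsingleton D] [T1Space E] (f : D → E) :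
    IsClosedEmbedding f :=
  .of_continuous_injective_isClosedMap (continuous_of_const fun x y => by
    rw [Subsingleton.elim x y]) (fun x y _ => Subsingleton.elim x y)
    fun A _ => ((toFinite A).image f).isClosed

theorem pieceCover_unit [Countable D] [T1Space D] : PieceCover D Unit := by
  obtain ⟨f, hf⟩ := exists_injective_nat D
  have hsub : ∀ n, (f ⁻¹' {n}).Subsingleton := fun n => subsingleton_singleton.preimage hf
  have hsub' : ∀ n, Subsingleton ↥(f ⁻¹' {n}) := fun n => (hsub n).coe_sort
  exact ⟨fun n => f ⁻¹' {n}, fun n => (hsub n).finite.isClosed, fun x => ⟨f x, rfl⟩,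
    fun n => (isClosedEmbedding_of_subsingleton fun _ => ()).polishSpace,
    fun n => ⟨fun _ => (), isClosedEmbedding_of_subsingleton _⟩⟩

theorem CantorEmbeddable.pieceCover_cantor [SigmaCompactSpace D] (hD : CantorEmbeddable D) :
    PieceCover D (ℕ → Bool) := by
  have := hD.metrizableSpace
  obtain ⟨c, hc⟩ := hD
  have key : ∀ n, IsClosedEmbedding fun x : ↥(compactCovering D n) => c x := fun n => by
    have := isCompact_iff_compactSpace.1 (isCompact_compactCovering D n)
    exact (hc.continuous.comp continuous_subtype_val).isClosedEmbedding
      (hc.injective.comp Subtype.val_injective)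
  exact ⟨compactCovering D, fun n => (isCompact_compactCovering D n).isClosed,
    exists_mem_compactCovering, fun n => (key n).polishSpace, fun n => ⟨_, key n⟩⟩

theorem CantorEmbeddable.pieceCover_baire (hD : CantorEmbeddable D) (hs : IsSigmaPolish D) :
    PieceCover D (ℕ → ℕ) := by
  obtain ⟨C, hC, hCU, hCP⟩ := hs
  refine ⟨C, hC, fun x => mem_iUnion.1 (hCU ▸ mem_univ x), hCP, fun n => ?_⟩
  have := hCP n
  exact (hD.subtype (C n)).exists_isClosedEmbedding_baire

theorem IsSigmaPolish.countable_prod [Countable D] [Nonempty D] [T2Space D] [PolishSpace T] :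
    IsSigmaPolish (D × T) := by
  obtain ⟨q, hq⟩ := exists_surjective_nat D
  have key : ∀ n, IsClosedEmbedding fun t : T => (q n, t) := fun n =>
    Function.LeftInverse.isClosedEmbedding (f := Prod.snd) (fun _ => rfl) continuous_snd
      (by fun_prop)
  refine ⟨fun n => range fun t : T => (q n, t), fun n => (key n).isClosed_range, ?_, fun n =>
    (key n).isEmbedding.toHomeomorph.symm.isClosedEmbedding.polishSpace⟩
  refine eq_univ_of_forall fun ⟨d, t⟩ => mem_iUnion.2 ?_
  obtain ⟨n, rfl⟩ := hq d
  exact ⟨n, t, rfl⟩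

theorem cantorEmbeddable_rat : CantorEmbeddable ℚ := .of_countable

theorem cantorEmbeddable_baire : CantorEmbeddable (ℕ → ℕ) := cantorEmbeddable_nat.nat_arrow

theorem cantorEmbeddable_cantor : CantorEmbeddable (ℕ → Bool) := .of_compactSpace

theorem CantorEmbeddable.exists_isClosedEmbedding_rat [Countable D] (hD : CantorEmbeddable D) :
    ∃ f : D → ℚ, IsClosedEmbedding f := by
  have := hD.metrizableSpace
  obtain ⟨q, hq⟩ := exists_surjective_nat ℚ
  refine pieceCover_unit.exists_isClosedEmbedding hD cantorEmbeddable_rat (G := fun n => {q n})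
    (fun n => isClosed_singleton) (fun n => interior_singleton _)
    (fun e => (hq e).imp fun n hn => hn.symm) ?_
  rintro O - ⟨e, he⟩
  exact ⟨fun _ => e, isClosedEmbedding_of_subsingleton _, by
    rw [range_const]; exact singleton_subset_iff.2 he⟩

/-- Every nonempty open subset of `ℚ × α^ω` contains a closed copy of `α^ω`, namely the
product of a point and a cylinder. -/
theorem exists_isClosedEmbedding_rat_prod {α : Type} [TopologicalSpace α] [DiscreteTopology α]
    {O : Set (ℚ × (ℕ → α))} (hO : IsOpen O) (hne : O.Nonempty) :
    ∃ g : (ℕ → α) → ℚ × (ℕ → α), IsClosedEmbedding g ∧ range g ⊆ O := by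
  obtain ⟨⟨q, c⟩, hqc⟩ := hne
  have hO' : (fun d : ℕ → α => (q, d)) ⁻¹' O ∈ 𝓝 c :=
    (hO.preimage (by fun_prop)).mem_nhds hqc
  obtain ⟨V, ⟨y, n, rfl⟩, hcV, hV⟩ :=
    (PiNat.isTopologicalBasis_cylinders fun _ : ℕ => α).mem_nhds_iff.1 hO'
  let g : (ℕ → α) → ℚ × (ℕ → α) := fun b => (q, fun i => if i < n then c i else b (i - n))
  have hg : Continuous g := by
    refine continuous_const.prodMk (continuous_pi fun i => ?_)
    split_ifs <;> fun_prop
  refine ⟨g, Function.LeftInverse.isClosedEmbedding (f := fun p i => p.2 (i + n)) ?_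
    (by fun_prop) hg, ?_⟩
  · intro b
    ext i
    simp [g]
  · rintro _ ⟨b, rfl⟩
    refine hV fun i hi => ?_
    simp only [if_pos hi]
    exact hcV i hi

theorem PieceCover.exists_isClosedEmbedding_rat_prod {α : Type} [TopologicalSpace α]
    [DiscreteTopology α] [Nonempty α] (hDT : PieceCover D (ℕ → α)) (hD : CantorEmbeddable D)
    (hE : CantorEmbeddable (ℚ × (ℕ → α))) :
    ∃ f : D → ℚ × (ℕ → α), IsClosedEmbedding f := by
  obtain ⟨q, hq⟩ := exists_surjective_nat ℚ
  refine hDT.exists_isClosedEmbedding hD hE (G := fun n => {q n} ×ˢ univ)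
    (fun n => isClosed_singleton.prod isClosed_univ) (fun n => ?_) (fun e => ?_)
    fun O hO => _root_.exists_isClosedEmbedding_rat_prod hO.isOpen
  · rw [interior_prod_eq, interior_singleton, empty_prod]
  · obtain ⟨n, hn⟩ := hq e.1
    exact ⟨n, hn.symm, mem_univ _⟩

theorem summand_nat_prod_rat : Summand (ℕ × ℚ) ℚ := by
  obtain ⟨f, hf⟩ := (cantorEmbeddable_nat.prod cantorEmbeddable_rat).exists_isClosedEmbedding_rat
  exact hf.summand

theorem summand_nat_prod_cantor : Summand (ℕ × (ℕ → Bool)) (ℕ → Bool) :=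
  (cantorEmbeddable_nat.prod cantorEmbeddable_cantor).summand_cantor

theorem summand_nat_prod_baire : Summand (ℕ × (ℕ → ℕ)) (ℕ → ℕ) :=
  (cantorEmbeddable_nat.prod cantorEmbeddable_baire).summand_baire

theorem CantorEmbeddable.summand_rat_prod_cantor [SigmaCompactSpace D] (hD : CantorEmbeddable D) :
    Summand D (ℚ × (ℕ → Bool)) := by
  obtain ⟨f, hf⟩ := hD.pieceCover_cantor.exists_isClosedEmbedding_rat_prod hD
    (cantorEmbeddable_rat.prod cantorEmbeddable_cantor)
  exact hf.summand

theorem CantorEmbeddable.summand_rat_prod_baire (hD : CantorEmbeddable D) (hs : IsSigmaPolish D) :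
    Summand D (ℚ × (ℕ → ℕ)) := by
  obtain ⟨f, hf⟩ := (hD.pieceCover_baire hs).exists_isClosedEmbedding_rat_prod hD
    (cantorEmbeddable_rat.prod cantorEmbeddable_baire)
  exact hf.summand

theorem summand_nat_prod_rat_prod_cantor :
    Summand (ℕ × (ℚ × (ℕ → Bool))) (ℚ × (ℕ → Bool)) :=
  (cantorEmbeddable_nat.prod
    (cantorEmbeddable_rat.prod cantorEmbeddable_cantor)).summand_rat_prod_cantor

theorem summand_nat_prod_rat_prod_baire :
    Summand (ℕ × (ℚ × (ℕ → ℕ))) (ℚ × (ℕ → ℕ)) :=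
  (Homeomorph.prodAssoc ℕ ℚ (ℕ → ℕ)).symm.weaklyHomeomorphic.summand.trans
    (((cantorEmbeddable_nat.prod cantorEmbeddable_rat).prod
      cantorEmbeddable_baire).summand_rat_prod_baire .countable_prod)

/-! ### Finding the universal spaces inside a given space -/

/-- Let `K` be a closed set no nonempty relatively open subset of which is Polish.  If all nonempty
relatively clopen subsets of `K` contain closed copies of `T`, then `X` contains closed copies of
all spaces glued from pieces of `T`.  The closed Polish sets covering `X` are nowhere dense in `K`,
so that the main construction applies with target `K`. -/
theorem IsSigmaPolish.exists_isClosedEmbedding_of_kernel (hs : IsSigmaPolish X)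
    (hX : CantorEmbeddable X) {K : Set X} (hK : IsClosed K) (hKne : K.Nonempty)
    (hbad : ∀ V, IsOpen V → (K ∩ V).Nonempty → ¬ PolishSpace ↥(K ∩ V))
    (hD : CantorEmbeddable D) (hDT : PieceCover D T)
    (hT : ∀ V, IsOpen V → (K ∩ V).Nonempty → IsClosed (K ∩ V) →
      ∃ g : T → X, IsClosedEmbedding g ∧ range g ⊆ K ∩ V) :
    ∃ H : D → X, IsClosedEmbedding H := by
  obtain ⟨C, hC, hCU, hCP⟩ := hs
  have := hKne.to_subtype
  obtain ⟨H, hH⟩ := hDT.exists_isClosedEmbedding hD (hX.subtype K)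
    (G := fun n => Subtype.val ⁻¹' C n) (fun n => (hC n).preimage continuous_subtype_val)
    (fun n => by
      by_contra hne
      obtain ⟨x, hx⟩ := nonempty_iff_ne_empty.2 hne
      obtain ⟨U, hU, hUo, hxU⟩ := mem_interior.1 hx
      obtain ⟨V, hV, rfl⟩ := isOpen_induced_iff.1 hUo
      refine hbad V hV ⟨x, x.2, hxU⟩ ?_
      have h₁ := ((hCP n).of_inter_isClosed hK).of_inter_isOpen hV
      have h₂ : C n ∩ K ∩ V = K ∩ V := by
        ext y
        exact ⟨fun hy => ⟨hy.1.2, hy.2⟩, fun hy =>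
          ⟨⟨hU (show (⟨y, hy.1⟩ : ↥K) ∈ _ from hy.2), hy.1⟩, hy.2⟩⟩
      rwa [h₂] at h₁)
    (fun e => by
      obtain ⟨n, hn⟩ := mem_iUnion.1 (hCU ▸ mem_univ e.1 : e.1 ∈ ⋃ n, C n)
      exact ⟨n, hn⟩)
    (by
      rintro O hO ⟨x, hx⟩
      obtain ⟨V, hV, rfl⟩ := isOpen_induced_iff.1 hO.isOpen
      have hcl : IsClosed (K ∩ V) := by
        rw [← Subtype.image_preimage_coe]
        exact hK.isClosedEmbedding_subtypeVal.isClosedMap _ hO.isClosed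
      obtain ⟨g, hg, hgV⟩ := hT V hV ⟨x, x.2, hx⟩ hcl
      have hgK : ∀ t, g t ∈ K := fun t => (hgV (mem_range_self t)).1
      refine ⟨fun t => ⟨g t, hgK t⟩, .of_comp .subtypeVal hg, ?_⟩
      rintro _ ⟨t, rfl⟩
      exact (hgV (mem_range_self t)).2)
  exact ⟨_, hK.isClosedEmbedding_subtypeVal.comp hH⟩

/-- The perfect set theorem for closed subsets of σ-Polish spaces. -/
theorem IsSigmaPolish.exists_isClosedEmbedding_cantor (hs : IsSigmaPolish X)
    (hX : CantorEmbeddable X) {S : Set X} (hS : IsClosed S) (hSc : ¬ S.Countable) :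
    ∃ g : (ℕ → Bool) → X, IsClosedEmbedding g ∧ range g ⊆ S := by
  have := hX.metrizableSpace
  obtain ⟨C, hC, hCU, hCP⟩ := hs
  obtain ⟨n, hn⟩ : ∃ n, ¬ (C n ∩ S).Countable := by
    by_contra! hcon
    refine hSc ((countable_iUnion hcon).mono fun x hx => ?_)
    obtain ⟨n, hn⟩ := mem_iUnion.1 (hCU ▸ mem_univ x : x ∈ ⋃ n, C n)
    exact mem_iUnion.2 ⟨n, hn, hx⟩
  have := (hCP n).of_inter_isClosed hS
  obtain ⟨f, -, hf, hfi⟩ := IsClosed.exists_nat_bool_injection_of_not_countable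
    (α := ↥(C n ∩ S)) isClosed_univ (by
      intro h
      exact hn (by rwa [countable_univ_iff, countable_coe_iff] at h))
  refine ⟨fun b => f b, (continuous_subtype_val.comp hf).isClosedEmbedding
    (Subtype.val_injective.comp hfi), ?_⟩
  rintro _ ⟨b, rfl⟩
  exact (f b).2.2

/-- The Hurewicz theorem for closed subsets of σ-Polish spaces. -/
theorem IsSigmaPolish.exists_isClosedEmbedding_baire (hs : IsSigmaPolish X)
    (hX : CantorEmbeddable X) {S : Set X} (hS : IsClosed S) (hSc : ¬ IsSigmaCompact S) :
    ∃ g : (ℕ → ℕ) → X, IsClosedEmbedding g ∧ range g ⊆ S := by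
  obtain ⟨C, hC, hCU, hCP⟩ := hs
  obtain ⟨n, hn⟩ : ∃ n, ¬ IsSigmaCompact (C n ∩ S) := by
    by_contra! hcon
    refine hSc ?_
    rw [← univ_inter S, ← hCU, iUnion_inter]
    exact isSigmaCompact_iUnion _ hcon
  have := (hCP n).of_inter_isClosed hS
  obtain ⟨f, hf⟩ := (hX.subtype (C n ∩ S)).exists_baire_isClosedEmbedding (by
    rwa [isSigmaCompact_univ_iff, ← isSigmaCompact_iff_sigmaCompactSpace])
  refine ⟨fun b => f b, ((hC n).inter hS).isClosedEmbedding_subtypeVal.comp hf, ?_⟩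
  rintro _ ⟨b, rfl⟩
  exact (f b).2.2

theorem IsSigmaPolish.rat_summand_of_kernel (hs : IsSigmaPolish X)
    (hX : CantorEmbeddable X) {K : Set X} (hK : IsClosed K) (hKne : K.Nonempty)
    (hbad : ∀ V, IsOpen V → (K ∩ V).Nonempty → ¬ PolishSpace ↥(K ∩ V)) : Summand ℚ X := by
  have := hX.metrizableSpace
  obtain ⟨H, hH⟩ := hs.exists_isClosedEmbedding_of_kernel hX hK hKne hbad cantorEmbeddable_rat
    pieceCover_unit (by
      rintro V - ⟨e, he⟩ -
      exact ⟨fun _ => e, isClosedEmbedding_of_subsingleton _, by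
        rw [range_const]; exact singleton_subset_iff.2 he⟩)
  exact hH.summand

theorem IsSigmaPolish.rat_prod_cantor_summand_of_kernel (hs : IsSigmaPolish X)
    (hX : CantorEmbeddable X) {K : Set X} (hK : IsClosed K) (hKne : K.Nonempty)
    (hbad : ∀ V, IsOpen V → (K ∩ V).Nonempty → ¬ (PolishSpace ↥(K ∩ V) ∨ (K ∩ V).Countable)) :
    Summand (ℚ × (ℕ → Bool)) X := by
  have hD := cantorEmbeddable_rat.prod cantorEmbeddable_cantor
  obtain ⟨H, hH⟩ := hs.exists_isClosedEmbedding_of_kernel hX hK hKne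
    (fun V hV hne h => hbad V hV hne (.inl h)) hD hD.pieceCover_cantor fun V hV hne hcl =>
      hs.exists_isClosedEmbedding_cantor hX hcl fun h => hbad V hV hne (.inr h)
  exact hH.summand

theorem IsSigmaPolish.rat_prod_baire_summand_of_kernel (hs : IsSigmaPolish X)
    (hX : CantorEmbeddable X) {K : Set X} (hK : IsClosed K) (hKne : K.Nonempty)
    (hbad : ∀ V, IsOpen V → (K ∩ V).Nonempty →
      ¬ (PolishSpace ↥(K ∩ V) ∨ IsSigmaCompact (K ∩ V))) :
    Summand (ℚ × (ℕ → ℕ)) X := by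
  have hD := cantorEmbeddable_rat.prod cantorEmbeddable_baire
  obtain ⟨H, hH⟩ := hs.exists_isClosedEmbedding_of_kernel hX hK hKne
    (fun V hV hne h => hbad V hV hne (.inl h)) hD (hD.pieceCover_baire .countable_prod)
    fun V hV hne hcl =>
      hs.exists_isClosedEmbedding_baire hX hcl fun h => hbad V hV hne (.inr h)
  exact hH.summand

end Applications

/-! ### The classification -/

section Classification

variable {X T : Type} [TopologicalSpace X] [TopologicalSpace T]

/-- If subspaces with the closed-hereditary property `𝒱` are summands of the absorbing space `T`,
then so is `X`, unless `X` contains a closed set which is nowhere locally in `𝒱`. -/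
theorem CantorEmbeddable.summand_or_kernel (hX : CantorEmbeddable X) (𝒱 : Set X → Prop) (h₀ : 𝒱 ∅)
    (h𝒱 : ∀ S F, 𝒱 S → IsClosed F → 𝒱 (S ∩ F)) (hT : Summand (ℕ × T) T)
    (h : ∀ S, 𝒱 S → Summand ↥S T) :
    Summand X T ∨
      ∃ K : Set X, IsClosed K ∧ K.Nonempty ∧
        ∀ V, IsOpen V → (K ∩ V).Nonempty → ¬ 𝒱 (K ∩ V) := by
  have := hX.secondCountableTopology
  refine (exists_scattered_or_kernel 𝒱 h₀ h𝒱).imp_left ?_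
  rintro ⟨k, hk, hk𝒱⟩
  exact (weaklyHomeomorphic_sigma_fiber k hk).summand.trans
    (Summand.sigma_of_absorbing (fun i => h _ (hk𝒱 i)) hT)

theorem polishSpace_empty : PolishSpace ↥(∅ : Set X) :=
  (isClosedEmbedding_of_subsingleton fun _ : ↥(∅ : Set X) => ()).polishSpace

theorem CantorEmbeddable.summand_cantor_of_set (hX : CantorEmbeddable X) {S : Set X}
    (hP : PolishSpace ↥S) (hS : IsSigmaCompact S) : Summand ↥S (ℕ → Bool) := by
  have := isSigmaCompact_iff_sigmaCompactSpace.1 hS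
  exact (hX.subtype S).summand_cantor

theorem CantorEmbeddable.summand_rat_of_set (hX : CantorEmbeddable X) {S : Set X}
    (hS : S.Countable) : Summand ↥S ℚ := by
  have := hS.to_subtype
  obtain ⟨f, hf⟩ := (hX.subtype S).exists_isClosedEmbedding_rat
  exact hf.summand

theorem CantorEmbeddable.summand_rat_prod_cantor_of_set (hX : CantorEmbeddable X) {S : Set X}
    (hS : IsSigmaCompact S) : Summand ↥S (ℚ × (ℕ → Bool)) := by
  have := isSigmaCompact_iff_sigmaCompactSpace.1 hS
  exact (hX.subtype S).summand_rat_prod_cantor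

/-- A countable space either is weakly homeomorphic to a discrete space, or contains a closed set
without isolated points and thereby a closed copy of `ℚ`. -/
theorem IsSigmaPolish.classification_countable [Infinite X] [Countable X] (hX : CantorEmbeddable X)
    (hs : IsSigmaPolish X) : WeaklyHomeomorphic X ℕ ∨ WeaklyHomeomorphic X ℚ := by
  have := hX.secondCountableTopology
  have := hX.metrizableSpace
  rcases exists_scattered_or_kernel (X := X) Set.Subsingleton subsingleton_empty
    (fun S F h _ => h.anti inter_subset_left) with ⟨k, hk, hks⟩ | ⟨K, hK, hKne, hbad⟩
  · left
    have h := weaklyHomeomorphic_sigma_fiber k hk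
    have hd : ∀ i, DiscreteTopology ↥(k ⁻¹' {i}) := fun i => by
      have := (hks i).coe_sort
      infer_instance
    have e : X ≃ Σ i, ↥(k ⁻¹' {i}) := (Equiv.sigmaFiberEquiv k).symm
    have : Infinite (Σ i, ↥(k ⁻¹' {i})) := .of_injective e e.injective
    obtain ⟨d⟩ := nonempty_denumerable (Σ i, ↥(k ⁻¹' {i}))
    exact h.trans (Homeomorph.mk (Denumerable.eqv _) continuous_of_discreteTopology
      continuous_of_discreteTopology).weaklyHomeomorphic
  · right
    obtain ⟨q, hq⟩ := exists_surjective_nat X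
    have hQ : Summand ℚ X := hs.rat_summand_of_kernel hX hK hKne fun V hV hne hP => by
      obtain ⟨n, W, hW, hne', hsub⟩ := exists_inter_subset_of_polishSpace hP hne
        (F := fun n => {q n}) (fun n => isClosed_singleton) fun x _ =>
          mem_iUnion.2 ((hq x).imp fun n hn => hn.symm)
      rw [inter_assoc] at hne' hsub
      exact hbad _ (hV.inter hW) hne' (subsingleton_singleton.anti hsub)
    obtain ⟨f, hf⟩ := hX.exists_isClosedEmbedding_rat
    exact hf.summand.antisymm hQ summand_nat_prod_rat

/-- In the uncountable σ-compact case, the pieces of scattered decompositions are allowed to be Polish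
or countable, and then only Polish.  The first kernel that occurs determines the type of `X`. -/
theorem IsSigmaPolish.classification_sigmaCompact (hX : CantorEmbeddable X) (hs : IsSigmaPolish X)
    (hc : ¬ (univ : Set X).Countable) (hσ : IsSigmaCompact (univ : Set X)) :
    WeaklyHomeomorphic X (ℕ → Bool) ∨ WeaklyHomeomorphic X (ℚ ⊕ (ℕ → Bool)) ∨
      WeaklyHomeomorphic X (ℚ × (ℕ → Bool)) := by
  have := hX.metrizableSpace
  have := isSigmaCompact_univ_iff.1 hσ
  have hsig : ∀ {K V : Set X}, IsClosed K → IsOpen V → IsSigmaCompact (K ∩ V) := fun hK hV =>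
    (hσ.of_isClosed_subset hK (subset_univ _)).inter_isOpen hV
  obtain ⟨g, hg, -⟩ := hs.exists_isClosedEmbedding_cantor hX isClosed_univ hc
  have hC : Summand (ℕ → Bool) X := hg.summand
  have habs := summand_nat_prod_rat.nat_prod_sum summand_nat_prod_cantor
  rcases hX.summand_or_kernel
      (fun S => (PolishSpace ↥S ∧ IsSigmaCompact S) ∨ S.Countable) (.inr countable_empty)
      (fun S F h hF => h.imp (fun h => ⟨h.1.of_inter_isClosed hF, h.2.inter_isClosed hF⟩)
        fun h => h.mono inter_subset_left) habs
      (fun S h => h.elim (fun h => (hX.summand_cantor_of_set h.1 h.2).trans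
        (summand_sum_right _ _)) fun h => (hX.summand_rat_of_set h).trans (summand_sum_left _ _))
    with h | ⟨K, hK, hKne, hbad⟩
  · rcases hX.summand_or_kernel (fun S => PolishSpace ↥S ∧ IsSigmaCompact S)
        ⟨polishSpace_empty, isSigmaCompact_empty⟩
        (fun S F h hF => ⟨h.1.of_inter_isClosed hF, h.2.inter_isClosed hF⟩)
        summand_nat_prod_cantor (fun S h => hX.summand_cantor_of_set h.1 h.2)
      with h' | ⟨K, hK, hKne, hbad⟩
    · exact .inl (h'.antisymm hC summand_nat_prod_cantor)
    · have hQ := hs.rat_summand_of_kernel hX hK hKne fun V hV hne hP =>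
        hbad V hV hne ⟨hP, hsig hK hV⟩
      exact .inr (.inl (h.antisymm (hQ.sum_of_absorbing hC summand_nat_prod_rat) habs))
  · have hQC := hs.rat_prod_cantor_summand_of_kernel hX hK hKne fun V hV hne h =>
      hbad V hV hne (h.imp_left fun h => ⟨h, hsig hK hV⟩)
    exact .inr (.inr (hX.summand_rat_prod_cantor.antisymm hQC summand_nat_prod_rat_prod_cantor))

/-- If `X` is not σ-compact, the pieces of scattered decompositions are allowed to be Polish or
σ-compact, then Polish or countable, and then only Polish.  The first kernel that occurs determines
the type of `X`. -/
theorem IsSigmaPolish.classification_not_sigmaCompact (hX : CantorEmbeddable X)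
    (hs : IsSigmaPolish X) (hσ : ¬ IsSigmaCompact (univ : Set X)) :
    WeaklyHomeomorphic X (ℕ → ℕ) ∨ WeaklyHomeomorphic X (ℚ ⊕ (ℕ → ℕ)) ∨
      WeaklyHomeomorphic X ((ℚ × (ℕ → Bool)) ⊕ (ℕ → ℕ)) ∨ WeaklyHomeomorphic X (ℚ × (ℕ → ℕ)) := by
  obtain ⟨g, hg, -⟩ := hs.exists_isClosedEmbedding_baire hX isClosed_univ hσ
  have hB : Summand (ℕ → ℕ) X := hg.summand
  have hP : ∀ S : Set X, PolishSpace ↥S → Summand ↥S (ℕ → ℕ) := fun S h =>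
    (hX.subtype S).summand_baire
  have habs₁ := summand_nat_prod_rat_prod_cantor.nat_prod_sum summand_nat_prod_baire
  have habs₂ := summand_nat_prod_rat.nat_prod_sum summand_nat_prod_baire
  rcases hX.summand_or_kernel (fun S => PolishSpace ↥S ∨ IsSigmaCompact S)
      (.inl polishSpace_empty)
      (fun S F h hF => h.imp (fun h => h.of_inter_isClosed hF) fun h => h.inter_isClosed hF)
      habs₁
      (fun S h => h.elim (fun h => (hP S h).trans (summand_sum_right _ _))
        fun h => (hX.summand_rat_prod_cantor_of_set h).trans (summand_sum_left _ _))
    with h | ⟨K, hK, hKne, hbad⟩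
  · rcases hX.summand_or_kernel (fun S => PolishSpace ↥S ∨ S.Countable)
        (.inl polishSpace_empty)
        (fun S F h hF => h.imp (fun h => h.of_inter_isClosed hF) fun h => h.mono inter_subset_left)
        habs₂
        (fun S h => h.elim (fun h => (hP S h).trans (summand_sum_right _ _))
          fun h => (hX.summand_rat_of_set h).trans (summand_sum_left _ _))
      with h' | ⟨K, hK, hKne, hbad⟩
    · rcases hX.summand_or_kernel (fun S => PolishSpace ↥S) polishSpace_empty
          (fun S F h hF => h.of_inter_isClosed hF) summand_nat_prod_baire hP
        with h'' | ⟨K, hK, hKne, hbad⟩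
      · exact .inl (h''.antisymm hB summand_nat_prod_baire)
      · have hQ := hs.rat_summand_of_kernel hX hK hKne hbad
        exact .inr (.inl (h'.antisymm (hQ.sum_of_absorbing hB summand_nat_prod_rat) habs₂))
    · have hQC := hs.rat_prod_cantor_summand_of_kernel hX hK hKne hbad
      exact .inr (.inr (.inl
        (h.antisymm (hQC.sum_of_absorbing hB summand_nat_prod_rat_prod_cantor) habs₁)))
  · have hQB := hs.rat_prod_baire_summand_of_kernel hX hK hKne hbad
    exact .inr (.inr (.inr
      ((hX.summand_rat_prod_baire hs).antisymm hQB summand_nat_prod_rat_prod_baire)))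

theorem IsSigmaPolish.classification [Infinite X] (hX : CantorEmbeddable X) (hs : IsSigmaPolish X) :
    WeaklyHomeomorphic X ℕ ∨ WeaklyHomeomorphic X (ℕ → Bool) ∨
      WeaklyHomeomorphic X (ℕ → ℕ) ∨ WeaklyHomeomorphic X ℚ ∨
      WeaklyHomeomorphic X (ℚ ⊕ (ℕ → Bool)) ∨
      WeaklyHomeomorphic X (ℚ × (ℕ → Bool)) ∨
      WeaklyHomeomorphic X (ℚ ⊕ (ℕ → ℕ)) ∨
      WeaklyHomeomorphic X ((ℚ × (ℕ → Bool)) ⊕ (ℕ → ℕ)) ∨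
      WeaklyHomeomorphic X (ℚ × (ℕ → ℕ)) := by
  by_cases hc : (univ : Set X).Countable
  · have := countable_univ_iff.1 hc
    have := hs.classification_countable hX
    tauto
  by_cases hσ : IsSigmaCompact (univ : Set X)
  · have := hs.classification_sigmaCompact hX hc hσ
    tauto
  · have := hs.classification_not_sigmaCompact hX hσ
    tauto

end Classification

theorem IsSigmaPolish.secondCountableTopology {X : Type*} [TopologicalSpace X]
    [TopologicalSpace.MetrizableSpace X] (hs : IsSigmaPolish X) : SecondCountableTopology X := by
  obtain ⟨C, -, hCU, hCP⟩ := hs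
  let := TopologicalSpace.metrizableSpaceMetric X
  have hsep : TopologicalSpace.IsSeparable (univ : Set X) := by
    rw [← hCU]
    exact .iUnion fun n => by
      have := hCP n
      exact .of_subtype _
  have := TopologicalSpace.isSeparable_univ_iff.1 hsep
  exact UniformSpace.secondCountable_of_separable X

theorem IsSigmaPolish.of_homeomorph {X Y : Type*} [TopologicalSpace X] [TopologicalSpace Y]
    (hs : IsSigmaPolish X) (e : X ≃ₜ Y) : IsSigmaPolish Y := by
  obtain ⟨C, hC, hCU, hCP⟩ := hs
  refine ⟨fun n => e '' C n, fun n => e.isClosed_image.2 (hC n), ?_, fun n => ?_⟩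
  · rw [← image_iUnion, hCU, image_univ, e.range_coe]
  · have := hCP n
    exact (e.image (C n)).symm.isClosedEmbedding.polishSpace

theorem classification_zeroDim_sigmaPolish
    {X : Type*} [TopologicalSpace X] [Infinite X]
    [TopologicalSpace.MetrizableSpace X] (hsp : IsSigmaPolish X)
    (hzd : TopologicalSpace.IsTopologicalBasis {s : Set X | IsClopen s}) :
    WeaklyHomeomorphic X ℕ ∨ WeaklyHomeomorphic X (ℕ → Bool) ∨
      WeaklyHomeomorphic X (ℕ → ℕ) ∨ WeaklyHomeomorphic X ℚ ∨
      WeaklyHomeomorphic X (ℚ ⊕ (ℕ → Bool)) ∨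
      WeaklyHomeomorphic X (ℚ × (ℕ → Bool)) ∨
      WeaklyHomeomorphic X (ℚ ⊕ (ℕ → ℕ)) ∨
      WeaklyHomeomorphic X ((ℚ × (ℕ → Bool)) ⊕ (ℕ → ℕ)) ∨
      WeaklyHomeomorphic X (ℚ × (ℕ → ℕ)) := by
  have := hsp.secondCountableTopology
  -- The copy of `X` inside the Cantor space lives in `Type`, where summands are considered.
  obtain ⟨c, hc⟩ := CantorEmbeddable.of_isTopologicalBasis hzd
  let e : X ≃ₜ ↥(range c) := hc.toHomeomorph
  have : Infinite ↥(range c) := .of_injective e e.injective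
  have h := (hsp.of_homeomorph e).classification (cantorEmbeddable_cantor.subtype (range c))
  have he : WeaklyHomeomorphic X ↥(range c) := e.weaklyHomeomorphic
  exact h.imp he.trans <| .imp he.trans <| .imp he.trans <| .imp he.trans <| .imp he.trans <|
    .imp he.trans <| .imp he.trans <| .imp he.trans he.trans
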